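/- Let n > r+t, r ≥ 3, t ≥ 1, t < 2^r - r - 1. If F ⊆ 2^[n] is a non-trivial r-wise t-agreeing family with |F| = (r+t+1)·2^(n-r-t), then there exist a set A ⊆ [n] with |A| = r+t and a set R ⊆ A such that F = {F Δ R : F ⊆ [n], |F ∩ A| ≤ 1}. -/

import Mathlib

open Finset
open scoped symmDiff

def agreeSet {n r : ℕ} (f : Fin r → Finset (Fin n)) : Finset (Fin n) :=
  Finset.univ.filter (fun x => (∀ i, x ∈ f i) ∨ (∀ i, x ∉ f i))

def AgreeingFamily (n r t : ℕ) (F : Finset (Finset (Fin n))) : Prop :=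
  ∀ f : Fin r → Finset (Fin n), (∀ i, f i ∈ F) → t ≤ (agreeSet f).card

def NonTrivialFamily (n : ℕ) (F : Finset (Finset (Fin n))) : Prop :=
  (∀ x : Fin n, ∃ A ∈ F, x ∉ A) ∧ (∀ x : Fin n, ∃ A ∈ F, x ∈ A)


/-!
Compressing a non-trivial agreeing family `F` towards smaller sets preserves its size and the
agreeing property. If some compression makes a point vanish from all members, then deleting that
point gives a strict inequality by induction on the ground set. Otherwise `F` becomes a lower set
containing all singletons, in which any `r` members leave at least `t` points uncovered, and
shifting makes it shifted.

A shifted complex is split at its largest point `x`. The part avoiding `x` is bounded by induction.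
In the link of `x`, any `r` members leave `r + t - 1` points uncovered, so induction, applied after
deleting its non-vertices, shows that its density is smaller than `1 / 2 ^ (r + t - 1)` unless it
avoids `r + t - 1` points, which is the extremal case. This needs `2 r + t + 1 ≤ 2 ^ r`. For larger
`t`, if some `r - 1` members leave only `t + 1` points uncovered, then shiftedness yields `t` of
these that the link avoids, and one argues on the rest; if not, then deleting the largest points one
at a time and summing geometric bounds on the links gives a strict inequality. The cases `r = 3`,
`t = 2, 3`, where this is too weak, rest on a bound for three lower sets without covering triple,
which follows from Kneser's theorem in the group of symmetric differences.

The equality case is carried back through every shift and every compression: each can undo the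
extremal structure only up to a swap of two points or a symmetric difference with one point.
-/

section Kneser

open AddAction
open scoped Pointwise

variable {G : Type*} [AddCommGroup G]

lemma card_mul_card_le_card_inf_mul_card {H K : AddSubgroup G} [Finite ↥(H ⊓ K)] {P : Finset H}
    {Q : Finset K} {S : Finset G} {z : G} (hS : ∀ u ∈ P, ∀ v ∈ Q, z + u + v ∈ S) :
    #P * #Q ≤ Nat.card ↥(H ⊓ K) * #S := by
  classical
  rw [← card_product]
  refine card_le_mul_card_image_of_maps_to (f := fun p ↦ z + p.1 + p.2)
    (fun p hp ↦ hS _ (mem_product.1 hp).1 _ (mem_product.1 hp).2) _ fun y _ ↦ ?_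
  obtain hempty | ⟨⟨u₀, v₀⟩, h₀⟩ :=
    ({p ∈ P ×ˢ Q | z + (p.1 : G) + p.2 = y}).eq_empty_or_nonempty
  · simp [hempty]
  rw [← Nat.card_eq_finsetCard]
  have hsub (p : {p ∈ P ×ˢ Q | z + (p.1 : G) + p.2 = y}) : (p.1.1 - u₀ : G) = v₀ - p.1.2 := by
    have hp : z + (p.1.1 : G) + p.1.2 = z + u₀ + v₀ :=
      (mem_filter.1 p.2).2.trans (mem_filter.1 h₀).2.symm
    rw [add_assoc, add_assoc, add_right_inj] at hp
    rw [sub_eq_sub_iff_add_eq_add, hp, add_comm]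
  refine Nat.card_le_card_of_injective (fun p ↦ (⟨p.1.1 - u₀, H.sub_mem p.1.1.2 u₀.2, ?_⟩ :
    ↥(H ⊓ K))) fun p p' h ↦ ?_
  · rw [hsub]
    exact K.sub_mem v₀.2 p.1.2.2
  · have hu : (p.1.1 : G) - u₀ = p'.1.1 - u₀ := congrArg Subtype.val h
    have hv : (v₀ : G) - p.1.2 = v₀ - p'.1.2 := by rw [← hsub, ← hsub, hu]
    exact Subtype.ext (Prod.ext (Subtype.ext (sub_left_injective hu))
      (Subtype.ext (sub_right_injective hv)))

lemma card_filter_eq_zero_or_card_le {L H : AddSubgroup G} [Fintype H] (hLH : L ≤ H)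
    {p : G → Prop} [DecidablePred p] (hp : ∀ c, p c → ∀ l ∈ L, p (c + l)) :
    #{u : H | p u} = 0 ∨ Nat.card L ≤ #{u : H | p u} := by
  refine or_iff_not_imp_left.2 fun hne ↦ ?_
  obtain ⟨u₀, hu₀⟩ := card_ne_zero.1 hne
  rw [← Nat.card_eq_finsetCard]
  refine Nat.card_le_card_of_injective (fun l ↦ ⟨⟨u₀ + l, H.add_mem u₀.2 (hLH l.2)⟩,
    by simpa using hp _ (mem_filter.1 hu₀).2 l l.2⟩) fun l l' h ↦ ?_
  exact Subtype.ext (add_left_cancel (congrArg (fun w ↦ (w.1 : G)) h))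

lemma add_le_add_or_add_le_add_of_mul_le_mul {h p p' q q' s t : ℕ} (hh : 0 < h) (hp : h ≤ p)
    (hp' : p' = 0 ∨ h ≤ p') (hq : q = 0 ∨ h ≤ q) (hq' : h ≤ q') (hs : p * q' ≤ h * s)
    (ht : p' * q ≤ h * t) : p + p' ≤ s + h ∨ q + q' ≤ t + h ∨ q + q' ≤ s := by
  obtain rfl | hq := hq
  · have := Nat.le_of_mul_le_mul_left ((Nat.mul_le_mul_right q' hp).trans hs) hh
    omega
  obtain rfl | hp' := hp'
  · have := Nat.le_of_mul_le_mul_right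
      ((Nat.mul_le_mul_left p hq').trans (hs.trans_eq (mul_comm h s))) hh
    omega
  by_contra! hc
  obtain ⟨x, rfl⟩ := Nat.exists_eq_add_of_le hp
  obtain ⟨x', rfl⟩ := Nat.exists_eq_add_of_le hp'
  obtain ⟨y, rfl⟩ := Nat.exists_eq_add_of_le hq
  obtain ⟨y', rfl⟩ := Nat.exists_eq_add_of_le hq'
  have hs' : h * s < h * (h + x + x') := Nat.mul_lt_mul_of_pos_left (by omega) hh
  have ht' : h * t < h * (h + y + y') := Nat.mul_lt_mul_of_pos_left (by omega) hh
  nlinarith [Nat.zero_le (x * y'), Nat.zero_le (y * x')]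

variable [DecidableEq G]

lemma add_mem_iff_of_mem_stabilizer {C : Finset G} {h : G} (hh : h ∈ stabilizer G C) {c : G} :
    c + h ∈ C ↔ c ∈ C := by
  rw [add_comm]
  exact mem_stabilizer_finset.1 hh c

lemma finite_stabilizer {C : Finset G} (hC : C.Nonempty) : Finite (stabilizer G C) := by
  rw [← stabilizer_coe_finset]
  exact stabilizer_finite hC C.finite_toSet

lemma card_filter_mul_card_filter_le {C D : Finset G} [Fintype (stabilizer G C)]
    [Fintype (stabilizer G D)] (z : G) :
    #{u : stabilizer G C | z + u ∈ D} * #{v : stabilizer G D | z + v ∉ C} ≤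
      Nat.card ↥(stabilizer G C ⊓ stabilizer G D) * #(D \ C) := by
  have : Finite ↥(stabilizer G C ⊓ stabilizer G D) :=
    .of_injective _ (AddSubgroup.inclusion_injective inf_le_left)
  refine card_mul_card_le_card_inf_mul_card (z := z) fun u hu v hv ↦ ?_
  rw [mem_sdiff, add_mem_iff_of_mem_stabilizer v.2, add_right_comm,
    add_mem_iff_of_mem_stabilizer u.2]
  exact ⟨(mem_filter.1 hu).2, (mem_filter.1 hv).2⟩

lemma card_stabilizer_le_card_sdiff_add {C D : Finset G} (hC : C.Nonempty) {z : G} (hzD : z ∈ D)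
    (hzC : z ∉ C) :
    Nat.card (stabilizer G C) ≤ #(D \ C) + Nat.card ↥(stabilizer G C ⊓ stabilizer G D) ∨
      Nat.card (stabilizer G D) ≤ #(C \ D) + Nat.card ↥(stabilizer G C ⊓ stabilizer G D) ∨
      Nat.card (stabilizer G D) ≤ #(D \ C) := by
  set H := stabilizer G C
  set K := stabilizer G D
  have : Finite H := finite_stabilizer hC
  have : Finite K := finite_stabilizer ⟨z, hzD⟩
  let := Fintype.ofFinite H
  let := Fintype.ofFinite K
  have hDC := card_filter_mul_card_filter_le (C := C) (D := D) z
  have hCD := card_filter_mul_card_filter_le (C := D) (D := C) z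
  have hpos : 0 < Nat.card ↥(H ⊓ K) :=
    have : Finite ↥(H ⊓ K) := .of_injective _ (AddSubgroup.inclusion_injective inf_le_left)
    Nat.card_pos
  have hinvC (c l : G) (hl : l ∈ H ⊓ K) : z + (c + l) ∈ C ↔ z + c ∈ C := by
    rw [← add_assoc, add_mem_iff_of_mem_stabilizer hl.1]
  have hinvD (c l : G) (hl : l ∈ H ⊓ K) : z + (c + l) ∈ D ↔ z + c ∈ D := by
    rw [← add_assoc, add_mem_iff_of_mem_stabilizer hl.2]
  have hH := card_filter_add_card_filter_not (s := (univ : Finset H)) (fun u ↦ z + u ∈ D)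
  have hK := card_filter_add_card_filter_not (s := (univ : Finset K)) (fun v ↦ z + v ∈ C)
  have hP := card_filter_eq_zero_or_card_le (L := H ⊓ K) inf_le_left (p := (z + · ∈ D))
    fun c hc l hl ↦ (hinvD c l hl).2 hc
  have hP' := card_filter_eq_zero_or_card_le (L := H ⊓ K) inf_le_left (p := (z + · ∉ D))
    fun c hc l hl ↦ (hinvD c l hl).not.2 hc
  have hQ := card_filter_eq_zero_or_card_le (L := H ⊓ K) inf_le_right (p := (z + · ∈ C))
    fun c hc l hl ↦ (hinvC c l hl).2 hc
  have hQ' := card_filter_eq_zero_or_card_le (L := H ⊓ K) inf_le_right (p := (z + · ∉ C))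
    fun c hc l hl ↦ (hinvC c l hl).not.2 hc
  have hP₀ : #{u : H | z + u ∈ D} ≠ 0 := card_ne_zero.2 ⟨0, by simpa using hzD⟩
  have hQ'₀ : #{v : K | z + v ∉ C} ≠ 0 := card_ne_zero.2 ⟨0, by simpa using hzC⟩
  rw [inf_comm, mul_comm] at hCD
  rw [Nat.card_eq_fintype_card (α := H), Nat.card_eq_fintype_card (α := K), ← card_univ,
    ← card_univ, ← hH, ← hK]
  exact add_le_add_or_add_le_add_of_mul_le_mul hpos (hP.resolve_left hP₀) hP' hQ
    (hQ'.resolve_left hQ'₀) hDC hCD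

lemma min_card_add_card_stabilizer_le_union (C D : Finset G) :
    min (#C + Nat.card (stabilizer G C)) (#D + Nat.card (stabilizer G D)) ≤
      #(C ∪ D) + Nat.card (stabilizer G (C ∪ D)) := by
  by_cases hDC : D ⊆ C
  · rw [union_eq_left.2 hDC]
    exact min_le_left _ _
  by_cases hCD : C ⊆ D
  · rw [union_eq_right.2 hCD]
    exact min_le_right _ _
  obtain ⟨z, hzD, hzC⟩ := not_subset.1 hDC
  obtain ⟨w, hwC, hwD⟩ := not_subset.1 hCD
  have hfin := finite_stabilizer (C := C ∪ D) ⟨w, mem_union_left _ hwC⟩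
  have hstab : Nat.card ↥(stabilizer G C ⊓ stabilizer G D) ≤ Nat.card (stabilizer G (C ∪ D)) := by
    refine Nat.card_le_card_of_injective _ (AddSubgroup.inclusion_injective ?_)
    simpa only [← stabilizer_coe_finset, coe_union] using
      stabilizer_inf_stabilizer_le_stabilizer_union
  have hz := card_stabilizer_le_card_sdiff_add ⟨w, hwC⟩ hzD hzC
  have hw := card_stabilizer_le_card_sdiff_add ⟨z, hzD⟩ hwC hwD
  rw [inf_comm] at hw
  have hcardC := card_sdiff_add_card D C
  have hcardD := card_sdiff_add_card C D
  rw [union_comm] at hcardC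
  omega

lemma exists_subset_add_card_add_card_le {A B : Finset G} {a b : G} (ha : a ∈ A) (hb : b ∈ B) :
    ∃ C ⊆ A + B, a + b ∈ C ∧ #A + #B ≤ #C + Nat.card (stabilizer G C) := by
  induction hk : #B using Nat.strong_induction_on generalizing A B with
  | _ k ih =>
  subst hk
  by_cases hall : ∀ e ∈ A, ∀ x ∈ B, x - b + e ∈ A
  · refine ⟨A + {b}, add_subset_add_left (singleton_subset_iff.2 hb),
      add_mem_add ha (mem_singleton_self b), ?_⟩
    have hfin := finite_stabilizer (C := A + {b}) ⟨a + b, add_mem_add ha (mem_singleton_self b)⟩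
    have hmem (x : B) : (x : G) - b ∈ stabilizer G (A + {b}) := by
      rw [mem_stabilizer_finset_iff_vadd_finset_subset, ← vadd_add_assoc]
      refine add_subset_add_right fun y hy ↦ ?_
      obtain ⟨e, he, rfl⟩ := mem_vadd_finset.1 hy
      exact hall e he x x.2
    rw [card_add_singleton, ← Nat.card_eq_finsetCard B]
    gcongr
    exact Nat.card_le_card_of_injective (fun x ↦ (⟨x - b, hmem x⟩ : stabilizer G (A + {b})))
      fun x y h ↦ Subtype.ext (sub_left_injective (congrArg Subtype.val h))
  · push Not at hall
    obtain ⟨e, he, x, hx, hxe⟩ := hall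
    have hmem {y : G} : y ∈ -(e - b) +ᵥ A ↔ y - b + e ∈ A := by
      rw [← neg_vadd_mem_iff, neg_neg, vadd_eq_add, show e - b + y = y - b + e by abel]
    have hlt : #(addDysonETransform (e - b) (A, B)).2 < #B :=
      card_lt_card ⟨inter_subset_left, fun h ↦ hxe (hmem.1 (mem_inter.1 (h hx)).2)⟩
    obtain ⟨C, hC, habC, hcard⟩ := ih _ hlt (A := (addDysonETransform (e - b) (A, B)).1)
      (mem_union_left _ ha) (mem_inter.2 ⟨hb, hmem.2 (by simpa using he)⟩) rfl
    rw [addDysonETransform.card] at hcard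
    exact ⟨C, hC.trans (addDysonETransform.subset _ _), habC, hcard⟩

theorem card_add_card_le_card_add_add_card_stabilizer {A B : Finset G} (hA : A.Nonempty)
    (hB : B.Nonempty) : #A + #B ≤ #(A + B) + Nat.card (stabilizer G (A + B)) := by
  have hcover : ∀ S : Finset G, S.Nonempty → S ⊆ A + B →
      ∃ C ⊆ A + B, S ⊆ C ∧ #A + #B ≤ #C + Nat.card (stabilizer G C) := by
    intro S hS₀ hSAB
    induction hS₀ using Finset.Nonempty.cons_induction with
    | singleton c =>
      obtain ⟨a, ha, b, hb, rfl⟩ := mem_add.1 (singleton_subset_iff.1 hSAB)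
      simpa only [singleton_subset_iff] using exists_subset_add_card_add_card_le ha hb
    | cons c S hcS _ ih =>
      rw [cons_eq_insert, insert_subset_iff] at hSAB
      obtain ⟨C, hCAB, hSC, hC⟩ := ih hSAB.2
      obtain ⟨a, ha, b, hb, rfl⟩ := mem_add.1 hSAB.1
      obtain ⟨D, hDAB, habD, hD⟩ := exists_subset_add_card_add_card_le ha hb
      refine ⟨D ∪ C, union_subset hDAB hCAB, ?_,
        (le_min hD hC).trans (min_card_add_card_stabilizer_le_union D C)⟩
      rw [cons_eq_insert, insert_subset_iff]
      exact ⟨mem_union_left _ habD, hSC.trans subset_union_right⟩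
  obtain ⟨C, hCAB, hABC, hC⟩ := hcover (A + B) (hA.add hB) subset_rfl
  rwa [hCAB.antisymm hABC] at hC

end Kneser

section Join

open AddAction
open scoped Pointwise FinsetFamily

variable {α : Type*} [DecidableEq α] {Y : Finset α} {A B C U H : Finset (Finset α)}

lemma card_add_card_le_two_pow_of_union_ne (hA : A ⊆ Y.powerset) (hC : C ⊆ Y.powerset)
    (hAC : ∀ a ∈ A, ∀ c ∈ C, a ∪ c ≠ Y) : #A + #C ≤ 2 ^ #Y := by
  have hinj : Set.InjOn (Y \ ·) (C : Set (Finset α)) := fun c hc d hd h ↦ by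
    rw [← Finset.sdiff_sdiff_eq_self (mem_powerset.1 (hC hc)),
      ← Finset.sdiff_sdiff_eq_self (mem_powerset.1 (hC hd)), show Y \ c = Y \ d from h]
  have hdisj : Disjoint A (C.image (Y \ ·)) := disjoint_right.2 fun _ hu huA ↦ by
    obtain ⟨c, hc, rfl⟩ := mem_image.1 hu
    exact hAC _ huA c hc (sdiff_union_of_subset (mem_powerset.1 (hC hc)))
  rw [← card_image_of_injOn hinj, ← card_union_of_disjoint hdisj, ← card_powerset]
  refine card_le_card (union_subset hA fun _ hu ↦ ?_)
  obtain ⟨c, -, rfl⟩ := mem_image.1 hu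
  exact mem_powerset.2 sdiff_subset

lemma isLowerSet_sups (hA : IsLowerSet (A : Set (Finset α)))
    (hB : IsLowerSet (B : Set (Finset α))) : IsLowerSet ((A ⊻ B : Finset _) : Set (Finset α)) := by
  intro u v hvu hu
  obtain ⟨a, ha, b, hb, rfl⟩ := mem_sups.1 hu
  refine mem_sups.2 ⟨a ∩ v, hA inter_subset_left ha, b ∩ v, hB inter_subset_left hb, ?_⟩
  rw [sup_eq_union, ← union_inter_distrib_right]
  exact inter_eq_right.2 hvu

lemma map_toBoolRing_add_map_toBoolRing [DecidableEq (AsBoolRing (Finset α))]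
    (hA : IsLowerSet (A : Set (Finset α))) (hB : IsLowerSet (B : Set (Finset α))) :
    A.map toBoolRing.toEmbedding + B.map toBoolRing.toEmbedding =
      (A ⊻ B).map toBoolRing.toEmbedding := by
  ext u
  simp only [mem_add, mem_map, mem_sups]
  constructor
  · rintro ⟨_, ⟨a, ha, rfl⟩, _, ⟨b, hb, rfl⟩, rfl⟩
    exact ⟨a ∆ b, ⟨a \ b, hA sdiff_subset ha, b \ a, hB sdiff_subset hb, rfl⟩, rfl⟩
  · rintro ⟨_, ⟨a, ha, b, hb, rfl⟩, rfl⟩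
    refine ⟨_, ⟨a, ha, rfl⟩, _, ⟨b \ a, hB sdiff_subset hb, rfl⟩, 
      congrArg toBoolRing (symmDiff_sdiff_eq_sup a b)⟩

lemma exists_symmDiff_mem_sups_card_add_card_le (hA : IsLowerSet (A : Set (Finset α)))
    (hB : IsLowerSet (B : Set (Finset α))) (hA₀ : A.Nonempty) (hB₀ : B.Nonempty) :
    ∃ H : Finset (Finset α), (∀ E ∈ A ⊻ B, ∀ h ∈ H, E ∆ h ∈ A ⊻ B) ∧
      #A + #B ≤ #(A ⊻ B) + #H := by
  classical
  let S := stabilizer (AsBoolRing (Finset α)) ((A ⊻ B).map toBoolRing.toEmbedding)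
  have : Finite S := finite_stabilizer ((hA₀.sups hB₀).map (f := toBoolRing.toEmbedding))
  let := Fintype.ofFinite S
  refine ⟨univ.map ((Function.Embedding.subtype (· ∈ S)).trans ofBoolRing.toEmbedding),
    fun E hE h hh ↦ ?_, ?_⟩
  · obtain ⟨g, -, rfl⟩ := mem_map.1 hh
    have hmem := (add_mem_iff_of_mem_stabilizer g.2).2 (mem_map_of_mem toBoolRing.toEmbedding hE)
    obtain ⟨E', hE', hEg⟩ := mem_map.1 hmem
    exact (show E' = E ∆ ofBoolRing (g : AsBoolRing (Finset α)) from hEg) ▸ hE'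
  · have hle := card_add_card_le_card_add_add_card_stabilizer
      (hA₀.map (f := toBoolRing.toEmbedding)) (hB₀.map (f := toBoolRing.toEmbedding))
    rw [map_toBoolRing_add_map_toBoolRing hA hB] at hle
    simpa only [card_map, card_univ, Nat.card_eq_fintype_card] using hle

lemma union_sup_mem_of_symmDiff_mem (hU : IsLowerSet (U : Set (Finset α)))
    (hUH : ∀ E ∈ U, ∀ h ∈ H, E ∆ h ∈ U) {E : Finset α} (hE : E ∈ U) : E ∪ H.sup id ∈ U := by
  induction H using Finset.induction_on with
  | empty => simpa using hE
  | insert h H _ ih =>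
    have hmem := hUH _ (hU (sdiff_subset (t := h)) (ih fun E hE h hh ↦ hUH E hE h
      (mem_insert_of_mem hh))) h (mem_insert_self h H)
    rwa [← sup_eq_union, sup_insert, sup_left_comm, sup_comm, id, ← sdiff_symmDiff_eq_sup]

theorem exists_union_mem_sups_card_add_card_le (hA : IsLowerSet (A : Set (Finset α)))
    (hB : IsLowerSet (B : Set (Finset α))) (hA₀ : A.Nonempty) (hB₀ : B.Nonempty) :
    ∃ Z : Finset α, (∀ E ∈ A ⊻ B, E ∪ Z ∈ A ⊻ B) ∧ #A + #B ≤ #(A ⊻ B) + 2 ^ #Z := by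
  obtain ⟨H, hstab, hle⟩ := exists_symmDiff_mem_sups_card_add_card_le hA hB hA₀ hB₀
  refine ⟨H.sup id, fun E hE ↦ union_sup_mem_of_symmDiff_mem (isLowerSet_sups hA hB) hstab hE,
    hle.trans (Nat.add_le_add_left ?_ _)⟩
  rw [← card_powerset]
  exact card_le_card fun h hh ↦ mem_powerset.2 (le_sup (f := id) hh)

lemma exists_eq_union_of_card_le_two (hA : ∀ y ∈ Y, {y} ∈ A) (hC : ∀ y ∈ Y, {y} ∈ C)
    (hA₀ : ∅ ∈ A) (hC₀ : ∅ ∈ C) (hY : #Y ≤ 2) : ∃ a ∈ A, ∃ c ∈ C, Y = a ∪ c := by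
  interval_cases h : #Y
  · exact ⟨∅, hA₀, ∅, hC₀, by simpa using h⟩
  · obtain ⟨z, rfl⟩ := card_eq_one.1 h
    exact ⟨{z}, hA z (by simp), ∅, hC₀, by simp⟩
  · obtain ⟨z, w, -, rfl⟩ := card_eq_two.1 h
    exact ⟨{z}, hA z (by simp), {w}, hC w (by simp), rfl⟩

theorem card_add_card_add_card_le_of_union_ne (hA : IsLowerSet (A : Set (Finset α)))
    (hB : IsLowerSet (B : Set (Finset α))) (hAY : A ⊆ Y.powerset) (hBY : B ⊆ Y.powerset)
    (hCY : C ⊆ Y.powerset) (hA₁ : ∀ y ∈ Y, {y} ∈ A) (hC₁ : ∀ y ∈ Y, {y} ∈ C) (hA₀ : ∅ ∈ A)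
    (hB₀ : ∅ ∈ B) (hC₀ : ∅ ∈ C) (hABC : ∀ a ∈ A, ∀ b ∈ B, ∀ c ∈ C, a ∪ b ∪ c ≠ Y) :
    8 * (#A + #B + #C) ≤ 9 * 2 ^ #Y := by
  obtain ⟨Z, hZ, hle⟩ := exists_union_mem_sups_card_add_card_le hA hB ⟨∅, hA₀⟩ ⟨∅, hB₀⟩
  have hsub : A ⊻ B ⊆ Y.powerset := sups_subset_iff.2 fun a ha b hb ↦
    mem_powerset.2 (union_subset (mem_powerset.1 (hAY ha)) (mem_powerset.1 (hBY hb)))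
  have hcover : ∀ u ∈ A ⊻ B, ∀ c ∈ C, u ∪ c ≠ Y := fun u hu c hc ↦ by
    obtain ⟨a, ha, b, hb, rfl⟩ := mem_sups.1 hu
    exact hABC a ha b hb c hc
  have hAB : A ⊆ A ⊻ B := fun a ha ↦ mem_sups.2 ⟨a, ha, ∅, hB₀, union_empty a⟩
  have hZY : Z ⊆ Y := subset_union_right.trans (mem_powerset.1 (hsub (hZ ∅ (hAB hA₀))))
  have hcompl := card_add_card_le_two_pow_of_union_ne hsub hCY hcover
  -- If `Y \ Z` had at most two points, it would be covered by `A` and `C`, and `Z` comes for free.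
  have hcard : 2 < #(Y \ Z) := by
    by_contra! h
    obtain ⟨a, ha, c, hc, hac⟩ := exists_eq_union_of_card_le_two
      (fun y hy ↦ hA₁ y (mem_sdiff.1 hy).1) (fun y hy ↦ hC₁ y (mem_sdiff.1 hy).1) hA₀ hC₀ h
    refine hcover _ (hZ a (hAB ha)) c hc ?_
    rw [union_right_comm, ← hac, sdiff_union_of_subset hZY]
  have hpow : 2 ^ (#Z + 3) ≤ 2 ^ #Y :=
    Nat.pow_le_pow_right two_pos (by rw [← card_sdiff_add_card_eq_card hZY]; omega)
  rw [pow_add] at hpow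
  omega

end Join

section WiseUnion

variable {α : Type*} [DecidableEq α] {F F' : Finset (Finset α)} {X Y U : Finset α} {r t t' c : ℕ}

/-- `IsUnionOf F r U` says that `U` is a union of `r` members of `F`, repetitions allowed. -/
inductive IsUnionOf (F : Finset (Finset α)) : ℕ → Finset α → Prop
  | zero : IsUnionOf F 0 ∅
  | succ {r : ℕ} {E V : Finset α} : E ∈ F → IsUnionOf F r V → IsUnionOf F (r + 1) (E ∪ V)

/-- The `r`-wise `t`-union property on the ground set `X`: any `r` members of `F` leave at least `t`
points of `X` uncovered. -/
def WiseUnion (r t : ℕ) (X : Finset α) (F : Finset (Finset α)) : Prop :=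
  ∀ U, IsUnionOf F r U → t ≤ #(X \ U)

lemma IsUnionOf.mono (h : F ⊆ F') (hU : IsUnionOf F r U) : IsUnionOf F' r U := by
  induction hU with
  | zero => exact .zero
  | succ hE _ ih => exact ih.succ (h hE)

lemma isUnionOf_empty (h : ∅ ∈ F) : ∀ r, IsUnionOf F r ∅
  | 0 => .zero
  | r + 1 => by simpa using IsUnionOf.succ h (isUnionOf_empty h r)

lemma isUnionOf_card_of_singleton_mem (h : ∀ x ∈ U, {x} ∈ F) : IsUnionOf F #U U := by
  induction U using Finset.induction_on with
  | empty => exact .zero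
  | insert x U hx ih =>
    rw [card_insert_of_notMem hx, insert_eq]
    exact .succ (h x (mem_insert_self _ _)) (ih fun y hy ↦ h y (mem_insert_of_mem hy))

namespace WiseUnion

lemma of_succ (h : WiseUnion (r + 1) t X F) (h₀ : ∅ ∈ F) : WiseUnion r t X F := fun U hU ↦ by
  simpa using h _ (hU.succ h₀)

lemma of_le (h : WiseUnion r t X F) (ht : t' ≤ t) : WiseUnion r t' X F :=
  fun U hU ↦ ht.trans (h U hU)

lemma of_subset (h : WiseUnion r t X F) (hF : F' ⊆ F) : WiseUnion r t X F' :=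
  fun U hU ↦ h U (hU.mono hF)

lemma le_card (h : WiseUnion r t X F) (h₀ : ∅ ∈ F) : t ≤ #X := by
  simpa using h ∅ (isUnionOf_empty h₀ r)

lemma succ_of_singleton_mem (h : WiseUnion (r + 1) t X F) (h₀ : ∅ ∈ F) (h₁ : ∀ x ∈ X, {x} ∈ F)
    (ht : 1 ≤ t) : WiseUnion r (t + 1) X F := fun U hU ↦ by
  obtain ⟨y, hy⟩ := card_pos.1 (ht.trans (h.of_succ h₀ U hU))
  have hle := h _ (hU.succ (h₁ y (mem_sdiff.1 hy).1))
  rw [← insert_eq, sdiff_insert, card_erase_of_mem hy] at hle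
  omega

lemma restrict (h : WiseUnion r t X F) (hYX : Y ⊆ X) (hc : #X ≤ #Y + c) :
    WiseUnion r (t - c) Y F := fun U hU ↦ by
  have hle := card_le_card (show X \ U ⊆ Y \ U ∪ X \ Y by grind)
  have hunion := card_union_le (Y \ U) (X \ Y)
  have hsdiff := card_sdiff_add_card_eq_card hYX
  have := h U hU
  omega

lemma nonMemberSubfamily (h : WiseUnion r t X F) (x : α) :
    WiseUnion r (t - 1) (X.erase x) (F.nonMemberSubfamily x) :=
  (h.of_subset (filter_subset _ _)).restrict (erase_subset _ _)
    (by have := pred_card_le_card_erase (s := X) (a := x); omega)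

end WiseUnion

end WiseUnion

section Density

variable {α : Type*} {X Y : Finset α} {F F' : Finset (Finset α)} {x : α}

/-- The proportion of the subsets of `X` that belong to `F`, for a family `F` of subsets of `X`. -/
def density (X : Finset α) (F : Finset (Finset α)) : ℚ := #F / 2 ^ #X

lemma density_empty (X : Finset α) : density X ∅ = 0 := by simp [density]

lemma density_mono (h : F ⊆ F') : density X F ≤ density X F' := by
  unfold density
  gcongr

lemma density_le_one (h : ∀ E ∈ F, E ⊆ X) : density X F ≤ 1 := by
  rw [density, div_le_one (by positivity)]
  exact_mod_cast (card_le_card fun E hE ↦ mem_powerset.2 (h E hE)).trans_eq (card_powerset X)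

lemma density_eq_div_two_pow {c : ℕ} (h : #X = #Y + c) : density X F = density Y F / 2 ^ c := by
  rw [density, density, h, pow_add, div_div]

variable [DecidableEq α]

lemma density_eq_density_erase_div_two (hx : x ∈ X) : density X F = density (X.erase x) F / 2 := by
  rw [density_eq_div_two_pow (card_erase_add_one hx).symm, pow_one]

lemma density_eq_density_subfamilies_div_two (F : Finset (Finset α)) (hx : x ∈ X) :
    density X F = (density (X.erase x) (F.memberSubfamily x) +
      density (X.erase x) (F.nonMemberSubfamily x)) / 2 := by
  rw [density_eq_density_erase_div_two hx, density, density, density, ← add_div, ← Nat.cast_add,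
    card_memberSubfamily_add_card_nonMemberSubfamily]

lemma density_add_density_le_one (hF : ∀ E ∈ F, E ⊆ X) (hF' : ∀ E ∈ F', E ⊆ X)
    (h : ∀ E ∈ F, ∀ E' ∈ F', E ∪ E' ≠ X) : density X F + density X F' ≤ 1 := by
  rw [density, density, ← add_div, div_le_one (by positivity)]
  exact_mod_cast card_add_card_le_two_pow_of_union_ne (fun E hE ↦ mem_powerset.2 (hF E hE))
    (fun E hE ↦ mem_powerset.2 (hF' E hE)) h

lemma density_le_half_of_wiseUnion (hF : ∀ E ∈ F, E ⊆ X) (h : WiseUnion 2 1 X F) :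
    density X F ≤ 1 / 2 := by
  have hsum := density_add_density_le_one hF hF fun E hE E' hE' hX ↦ by
    simpa [hX] using h _ (.succ hE (.succ hE' .zero))
  linarith

end Density

section ShiftedComplex

variable {α : Type*} [LinearOrder α] {X Y : Finset α} {F : Finset (Finset α)} {x : α}

/-- A shifted simplicial complex on the ground set `X`: a family of subsets of `X` that is closed
under taking subsets and under replacing an element of a member by a smaller element of `X`. -/
structure IsShiftedComplex (X : Finset α) (F : Finset (Finset α)) : Prop where
  subset : ∀ E ∈ F, E ⊆ X
  isLowerSet : IsLowerSet (F : Set (Finset α))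
  shift : ∀ E ∈ F, ∀ j ∈ E, ∀ i ∈ X, i ∉ E → i < j → insert i (E.erase j) ∈ F

namespace IsShiftedComplex

lemma empty_mem (h : IsShiftedComplex X F) (hF : F.Nonempty) : ∅ ∈ F :=
  have ⟨E, hE⟩ := hF
  h.isLowerSet (empty_subset E) hE

lemma restrict (h : IsShiftedComplex X F) (hYX : Y ⊆ X) (hF : ∀ E ∈ F, E ⊆ Y) :
    IsShiftedComplex Y F :=
  ⟨hF, h.isLowerSet, fun E hE j hj i hi ↦ h.shift E hE j hj i (hYX hi)⟩

lemma nonMemberSubfamily (h : IsShiftedComplex X F) (x : α) :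
    IsShiftedComplex (X.erase x) (F.nonMemberSubfamily x) := by
  refine ⟨fun E hE ↦ ?_, h.isLowerSet.nonMemberSubfamily, fun E hE j hj i hi hiE hij ↦ ?_⟩
  · rw [mem_nonMemberSubfamily] at hE
    exact subset_erase.2 ⟨h.subset E hE.1, hE.2⟩
  · rw [mem_nonMemberSubfamily] at hE ⊢
    rw [mem_erase] at hi
    exact ⟨h.shift E hE.1 j hj i hi.2 hiE hij, by grind⟩

lemma memberSubfamily (h : IsShiftedComplex X F) (x : α) :
    IsShiftedComplex (X.erase x) (F.memberSubfamily x) := by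
  refine ⟨fun E hE ↦ ?_, h.isLowerSet.memberSubfamily, fun E hE j hj i hi hiE hij ↦ ?_⟩
  · rw [mem_memberSubfamily] at hE
    exact subset_erase.2 ⟨(subset_insert x E).trans (h.subset _ hE.1), hE.2⟩
  · rw [mem_memberSubfamily] at hE ⊢
    rw [mem_erase] at hi
    have hxj : x ≠ j := fun hxj ↦ hE.2 (hxj ▸ hj)
    have hmem := h.shift _ hE.1 j (mem_insert_of_mem hj) i hi.2 (by grind) hij
    rw [erase_insert_of_ne hxj, Finset.insert_comm] at hmem
    exact ⟨hmem, by grind⟩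

lemma exists_isUnionOf_superset (h : IsShiftedComplex X F) (hx : ∀ y ∈ X, y ≤ x) {k : ℕ}
    {U W : Finset α} (hU : IsUnionOf (F.memberSubfamily x) (k + 1) U) (hW : W ⊆ X.erase x)
    (hWU : Disjoint W U) :
    ∃ U', IsUnionOf F (k + 1) U' ∧ insert x U ⊆ U' ∧ #(W \ U') ≤ #W - k := by
  induction k generalizing U with
  | zero =>
    obtain _ | ⟨hE, hV⟩ := hU
    cases hV
    exact ⟨_, .succ (mem_memberSubfamily.1 hE).1 .zero, by grind, card_le_card sdiff_subset⟩
  | succ k ih =>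
    obtain _ | @⟨_, E, V, hE, hV⟩ := hU
    rw [mem_memberSubfamily] at hE
    obtain ⟨V', hV', hVV', hcard⟩ := ih hV (hWU.mono_right subset_union_right)
    obtain hWV' | hWV' := (W \ V').eq_empty_or_nonempty
    · refine ⟨_, .succ hE.1 hV', by grind, ?_⟩
      rw [union_comm, ← sup_eq_union, ← sdiff_sdiff, hWV', empty_sdiff, card_empty]
      exact Nat.zero_le _
    -- `V'` already covers `x`, so `x` can be traded for an uncovered point `y` in the next set.
    · obtain ⟨y, hy⟩ := hWV'
      have hyW := (mem_sdiff.1 hy).1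
      have hyX := mem_erase.1 (hW hyW)
      have hyE : y ∉ E := fun hyE ↦ disjoint_left.1 hWU hyW (mem_union_left _ hyE)
      have hmem := h.shift _ hE.1 x (mem_insert_self _ _) y hyX.2 (by simp [hyX.1, hyE])
        ((hx y hyX.2).lt_of_ne hyX.1)
      rw [erase_insert hE.2] at hmem
      refine ⟨_, .succ hmem hV', by grind, ?_⟩
      have hle : #(W \ (insert y E ∪ V')) ≤ #((W \ V').erase y) := card_le_card (by grind)
      rw [card_erase_of_mem hy] at hle
      omega

lemma wiseUnion_memberSubfamily (h : IsShiftedComplex X F) (hx : ∀ y ∈ X, y ≤ x) {k q : ℕ}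
    (hq : 1 ≤ q) (hF : WiseUnion (k + 1) q X F) :
    WiseUnion (k + 1) (q + k) (X.erase x) (F.memberSubfamily x) := fun U hU ↦ by
  obtain ⟨U', hU', hUU', hcard⟩ := h.exists_isUnionOf_superset hx hU (W := X.erase x \ U)
    sdiff_subset sdiff_disjoint
  have hle := (hF U' hU').trans (card_le_card (show X \ U' ⊆ (X.erase x \ U) \ U' by grind))
  omega

end IsShiftedComplex

end ShiftedComplex

section Excess

/-- The accumulated excess `∑_{i=1}^e ((6/5)^i - 1)` that the geometric bound
`ShiftedBound.two_pow_mul_density_le` picks up when deleting `e` points one after the other. -/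
def excess (e : ℕ) : ℚ := ∑ i ∈ range e, ((6 / 5) ^ (i + 1) - 1)

lemma excess_succ (e : ℕ) : excess (e + 1) = excess e + ((6 / 5) ^ (e + 1) - 1) :=
  sum_range_succ _ _

lemma excess_succ_sub (e T : ℕ) :
    excess (e + 1 - T) = excess (e - T) + ((6 / 5) ^ (e + 1 - T) - 1) := by
  obtain h | h := le_or_gt T e
  · rw [Nat.sub_add_comm h, excess_succ]
  · simp [Nat.sub_eq_zero_of_le h, Nat.sub_eq_zero_of_le h.le]

lemma excess_mono : Monotone excess := fun _ _ h ↦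
  sum_le_sum_of_subset_of_nonneg (range_mono h)
    fun i _ _ ↦ sub_nonneg.2 (one_le_pow₀ (by norm_num))

lemma excess_nonneg (e : ℕ) : 0 ≤ excess e := by
  simpa [excess] using excess_mono (Nat.zero_le e)

lemma excess_add_three_lt (j : ℕ) : excess (j + 3) + 2 < 2 ^ (j + 2) := by
  induction j with
  | zero => norm_num [excess, sum_range_succ]
  | succ j ih =>
    have hpow : (6 / 5 : ℚ) ^ j ≤ 2 ^ j := by gcongr; norm_num
    have hpos : (0 : ℚ) < 2 ^ j := by positivity
    rw [show j + 1 + 3 = j + 3 + 1 by ring, excess_succ]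
    simp only [pow_succ] at ih hpow ⊢
    linarith

end Excess

section ShiftedBound

variable {α : Type*} [LinearOrder α] {X : Finset α} {F : Finset (Finset α)} {k r t T T₀ : ℕ}

/-- The bound of the theorem for shifted complexes on ground sets of size at most `k`; it is proved
for all `k` by induction. -/
def ShiftedBound (α : Type*) [LinearOrder α] (k : ℕ) : Prop :=
  ∀ (X : Finset α) (F : Finset (Finset α)), #X ≤ k → ∀ r t : ℕ, 3 ≤ r → 1 ≤ t →
    r + t + 2 ≤ 2 ^ r → IsShiftedComplex X F → (∀ x ∈ X, {x} ∈ F) → WiseUnion r t X F →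
    density X F ≤ (r + t + 1) / 2 ^ (r + t)

lemma density_le_mul_pow {β c : ℚ} (hβ : 0 ≤ β) (hβr : 1 + β ^ (r + 1) ≤ 2 * β) (hc : 0 ≤ c)
    (hT : ∀ (X : Finset α) (F : Finset (Finset α)), #X ≤ k → IsShiftedComplex X F →
      WiseUnion (r + 1) T X F → density X F ≤ c) {i : ℕ} (hX : #X ≤ k) (hF : IsShiftedComplex X F)
    (hU : WiseUnion (r + 1) (T + i) X F) : density X F ≤ c * β ^ i := by
  induction X using Finset.strongInduction generalizing F i with
  | H X ih =>
  obtain rfl | hF₀ := F.eq_empty_or_nonempty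
  · rw [density_empty]
    positivity
  obtain _ | i := i
  · simpa using hT X F hX hF hU
  have hcard := hU.le_card (hF.empty_mem hF₀)
  obtain ⟨x, hx, hmax⟩ := X.exists_max_image id (card_pos.1 (by omega))
  have hX' : #(X.erase x) ≤ k := card_erase_le.trans hX
  have hmem := ih _ (erase_ssubset hx) (i := i + 1 + r) hX' (hF.memberSubfamily x)
    (by rw [← add_assoc T]; exact hF.wiseUnion_memberSubfamily hmax (by omega) hU)
  have hnonMem := ih _ (erase_ssubset hx) (i := i) hX' (hF.nonMemberSubfamily x)
    (hU.nonMemberSubfamily x)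
  rw [density_eq_density_subfamilies_div_two F hx, div_le_iff₀ two_pos]
  calc _ ≤ c * β ^ (i + 1 + r) + c * β ^ i := add_le_add hmem hnonMem
    _ = c * β ^ i * (1 + β ^ (r + 1)) := by ring
    _ ≤ c * β ^ i * (2 * β) := mul_le_mul_of_nonneg_left hβr (by positivity)
    _ = c * β ^ (i + 1) * 2 := by ring

lemma two_mul_add_two_le_two_pow (hr : 3 ≤ r) : 2 * r + 2 ≤ 2 ^ r := by
  induction r, hr using Nat.le_induction with
  | base => norm_num
  | succ r hr ih => omega

lemma add_one_div_two_pow_lt (hT : r + T + 2 ≤ 2 ^ r) :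
    (r + T + 1 : ℚ) / 2 ^ (r + T) < 1 / 2 ^ T := by
  rw [pow_add, ← div_div]
  gcongr
  rw [div_lt_one (by positivity)]
  exact_mod_cast Nat.lt_of_succ_le hT

lemma density_le_of_disjoint {Z : Finset α} (hF : ∀ E ∈ F, E ⊆ X) (hZX : Z ⊆ X)
    (hZ : ∀ E ∈ F, Disjoint E Z) : density X F ≤ 1 / 2 ^ #Z := by
  rw [density_eq_div_two_pow (card_sdiff_add_card_eq_card hZX).symm]
  gcongr
  exact density_le_one fun E hE ↦ subset_sdiff.2 ⟨hF E hE, hZ E hE⟩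

namespace ShiftedBound

lemma density_lt_or_exists_disjoint (hk : ShiftedBound α k) (hr : 3 ≤ r)
    (hT : r + T + 2 ≤ 2 ^ r) (hX : #X ≤ k) (hF : IsShiftedComplex X F) (hU : WiseUnion r T X F) :
    density X F < 1 / 2 ^ T ∨ ∃ Z ⊆ X, #Z = T ∧ ∀ E ∈ F, Disjoint E Z := by
  induction T generalizing X with
  | zero => exact .inr ⟨∅, by simp⟩
  | succ T ih =>
    by_cases hsing : ∀ x ∈ X, {x} ∈ F
    · exact .inl ((hk X F hX r (T + 1) hr (by omega) hT hF hsing hU).trans_lt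
        (add_one_div_two_pow_lt hT))
    push Not at hsing
    obtain ⟨y, hy, hyF⟩ := hsing
    have hyE : ∀ E ∈ F, y ∉ E := fun E hE h ↦ hyF (hF.isLowerSet (singleton_subset_iff.2 h) hE)
    have hcard := card_erase_add_one hy
    obtain hlt | ⟨Z, hZX, rfl, hZ⟩ := ih (X := X.erase y) (by omega) (by omega)
      (hF.restrict (erase_subset _ _) fun E hE ↦ subset_erase.2 ⟨hF.subset E hE, hyE E hE⟩)
      (hU.restrict (c := 1) (erase_subset _ _) hcard.ge)
    · left
      rw [density_eq_density_erase_div_two hy, pow_succ, ← div_div]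
      gcongr
    · obtain ⟨hZX, hyZ⟩ := subset_erase.1 hZX
      exact .inr ⟨insert y Z, insert_subset hy hZX, card_insert_of_notMem hyZ,
        fun E hE ↦ disjoint_insert_right.2 ⟨hyE E hE, hZ E hE⟩⟩

lemma density_le_one_div_two_pow (hk : ShiftedBound α k) (hr : 3 ≤ r)
    (hT : r + T + 2 ≤ 2 ^ r) (hX : #X ≤ k) (hF : IsShiftedComplex X F) (hU : WiseUnion r T X F) :
    density X F ≤ 1 / 2 ^ T := by
  obtain hlt | ⟨Z, hZX, rfl, hZ⟩ := hk.density_lt_or_exists_disjoint hr hT hX hF hU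
  · exact hlt.le
  · exact density_le_of_disjoint hF.subset hZX hZ

lemma density_le_of_wiseUnion_three (hk : ShiftedBound α k) (i : ℕ) (hX : #X ≤ k)
    (hF : IsShiftedComplex X F) (hU : WiseUnion 3 (3 + i) X F) :
    density X F ≤ 1 / 8 * (5 / 8) ^ i := by
  refine density_le_mul_pow (r := 2) (T := 3) (by norm_num) (by norm_num) (by norm_num) ?_ hX hF hU
  intro X F hX hF hU
  simpa [show (2 : ℚ) ^ 3 = 8 by norm_num] using
    hk.density_le_one_div_two_pow le_rfl (by norm_num) hX hF hU

lemma two_pow_mul_density_le (hk : ShiftedBound α k) (hr : 3 ≤ r)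
    (hT₀ : r + 1 + T₀ + 2 ≤ 2 ^ (r + 1)) (hX : #X ≤ k) (hF : IsShiftedComplex X F)
    (hU : WiseUnion (r + 1) T X F) : 2 ^ T * density X F ≤ (6 / 5) ^ (T - T₀) := by
  obtain hT | hT := le_total T T₀
  · rw [Nat.sub_eq_zero_of_le hT, pow_zero, mul_comm, ← le_div_iff₀ (by positivity)]
    exact hk.density_le_one_div_two_pow (by omega) (by omega) hX hF hU
  obtain ⟨i, rfl⟩ := Nat.exists_eq_add_of_le hT
  have hβ : 1 + (3 / 5 : ℚ) ^ (r + 1) ≤ 2 * (3 / 5) := by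
    have := pow_le_pow_of_le_one (a := (3 / 5 : ℚ)) (by norm_num) (by norm_num)
      (show 4 ≤ r + 1 by omega)
    linarith
  have hle := density_le_mul_pow (c := 1 / 2 ^ T₀) (by norm_num) hβ (by positivity)
    (fun X F ↦ hk.density_le_one_div_two_pow (by omega) hT₀) hX hF hU
  rw [Nat.add_sub_cancel_left]
  calc _ ≤ 2 ^ (T₀ + i) * (1 / 2 ^ T₀ * (3 / 5 : ℚ) ^ i) := by gcongr
    _ = (2 * (3 / 5)) ^ i := by rw [mul_pow, pow_add]; field_simp
    _ = (6 / 5) ^ i := by norm_num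

lemma two_pow_mul_density_le_add_excess (hk : ShiftedBound α k) (hr : 3 ≤ r)
    (hT₀ : r + 1 + T₀ + 2 ≤ 2 ^ (r + 1)) (hT : r + T + 2 ≤ 2 ^ r) (hT2 : 2 ≤ T) {m : ℕ}
    (hX : #X ≤ k + 1) (hXm : m = 0 → #X ≤ k) (ht : t + 2 = T + m) (hF : IsShiftedComplex X F)
    (h₀ : ∅ ∈ F) (hU : WiseUnion (r + 1) t X F) (hU' : WiseUnion r (t + 2) X F) :
    2 ^ (r + 1 + t) * density X F ≤ m + excess (r + t - T₀) + 2 ^ (r - 1) := by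
  induction m generalizing t X F with
  | zero =>
    have hle := hk.density_le_one_div_two_pow hr (by omega) (hXm rfl) hF hU'
    have hnonneg := excess_nonneg (r + t - T₀)
    rw [show r + 1 + t = (r - 1) + (t + 2) by omega, pow_add, mul_assoc]
    have hmul : 2 ^ (r - 1) * (2 ^ (t + 2) * density X F) ≤ 2 ^ (r - 1) * 1 := by
      gcongr
      rwa [mul_comm, ← le_div_iff₀ (by positivity)]
    push_cast
    linarith
  | succ m ih =>
    have hcard := hU'.le_card h₀
    obtain ⟨x, hx, hmax⟩ := X.exists_max_image id (card_pos.1 (by omega))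
    have hcx := card_erase_add_one hx
    obtain ⟨t, rfl⟩ : ∃ t', t = t' + 1 := ⟨t - 1, by omega⟩
    have hmem := hk.two_pow_mul_density_le hr hT₀ (by omega) (hF.memberSubfamily x)
      (hF.wiseUnion_memberSubfamily hmax (by omega) hU)
    have hnonMem := ih (by omega) (by omega) (by omega) (hF.nonMemberSubfamily x)
      (mem_nonMemberSubfamily.2 ⟨h₀, notMem_empty x⟩) (hU.nonMemberSubfamily x)
      (hU'.nonMemberSubfamily x)
    have hexcess := excess_succ_sub (r + t) T₀
    rw [density_eq_density_subfamilies_div_two F hx, ← add_assoc (r + 1), ← add_assoc r]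
    rw [show t + 1 + r = r + t + 1 by ring] at hmem
    rw [Nat.add_sub_cancel, show r + 1 + t = r + t + 1 by ring] at hnonMem
    rw [show r + 1 + t = r + t + 1 by ring]
    rw [pow_succ _ (r + t + 1)]
    push_cast
    linarith

lemma density_lt_of_two_pow_lt (hk : ShiftedBound α k) (hr : 3 ≤ r) (hX : #X ≤ k + 1)
    (ht : r + 1 + t + 2 ≤ 2 ^ (r + 1)) (hbig : 2 ^ (r + 1) < r + 1 + (r + t) + 2)
    (hF : IsShiftedComplex X F) (h₀ : ∅ ∈ F) (hU : WiseUnion (r + 1) t X F)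
    (hU' : WiseUnion r (t + 2) X F) :
    density X F < (r + 1 + t + 1 : ℚ) / 2 ^ (r + 1 + t) := by
  obtain ⟨j, rfl⟩ := Nat.exists_eq_add_of_le' hr
  have hj := two_mul_add_two_le_two_pow hr
  have hpow : 2 ^ (j + 4) = 2 * 2 ^ (j + 3) := pow_succ' ..
  have hle := hk.two_pow_mul_density_le_add_excess hr (T₀ := 2 ^ (j + 4) - (j + 6))
    (T := 2 ^ (j + 3) - (j + 5)) (m := t + j + 7 - 2 ^ (j + 3)) (t := t)
    (by omega) (by omega) (by omega) hX (by omega) (by omega) hF h₀ hU hU'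
  have hmono := excess_mono (show j + 3 + t - (2 ^ (j + 4) - (j + 6)) ≤ j + 3 by omega)
  have hlt := excess_add_three_lt j
  rw [Nat.cast_sub (by omega)] at hle
  rw [lt_div_iff₀ (by positivity)]
  push_cast at hle ⊢
  rw [pow_succ (2 : ℚ) (j + 2)] at hle
  linarith

end ShiftedBound

end ShiftedBound

section RankThree

variable {α : Type*} [LinearOrder α] {X Y Z : Finset α} {F A B C : Finset (Finset α)}
  {x y a b : α} {k : ℕ}

lemma WiseUnion.union_union_ne (h : WiseUnion 3 1 X F) {E₁ E₂ E₃ : Finset α} (h₁ : E₁ ∈ F)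
    (h₂ : E₂ ∈ F) (h₃ : E₃ ∈ F) : E₁ ∪ E₂ ∪ E₃ ≠ X := by
  rintro rfl
  simpa [union_assoc] using h _ (.succ h₁ (.succ h₂ (.succ h₃ .zero)))

lemma density_add_density_add_density_le (hA : IsLowerSet (A : Set (Finset α)))
    (hB : IsLowerSet (B : Set (Finset α))) (hAY : ∀ E ∈ A, E ⊆ Y) (hBY : ∀ E ∈ B, E ⊆ Y)
    (hCY : ∀ E ∈ C, E ⊆ Y) (hA₁ : ∀ y ∈ Y, {y} ∈ A) (hC₁ : ∀ y ∈ Y, {y} ∈ C) (hA₀ : ∅ ∈ A)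
    (hB₀ : ∅ ∈ B) (hC₀ : ∅ ∈ C) (hABC : ∀ E₁ ∈ A, ∀ E₂ ∈ B, ∀ E₃ ∈ C, E₁ ∪ E₂ ∪ E₃ ≠ Y) :
    density Y A + density Y B + density Y C ≤ 9 / 8 := by
  rw [density, density, density, ← add_div, ← add_div,
    div_le_div_iff₀ (by positivity) (by norm_num), mul_comm]
  exact_mod_cast card_add_card_add_card_le_of_union_ne hA hB
    (fun E hE ↦ mem_powerset.2 (hAY E hE)) (fun E hE ↦ mem_powerset.2 (hBY E hE))
    (fun E hE ↦ mem_powerset.2 (hCY E hE)) hA₁ hC₁ hA₀ hB₀ hC₀ hABC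

lemma density_eq_density_subfamilies_div_four (F : Finset (Finset α)) (ha : a ∈ X)
    (hb : b ∈ X.erase a) :
    density X F = (density ((X.erase a).erase b) ((F.memberSubfamily a).memberSubfamily b) +
      density ((X.erase a).erase b) ((F.memberSubfamily a).nonMemberSubfamily b) +
      density ((X.erase a).erase b) ((F.nonMemberSubfamily a).memberSubfamily b) +
      density ((X.erase a).erase b) ((F.nonMemberSubfamily a).nonMemberSubfamily b)) / 4 := by
  rw [density_eq_density_subfamilies_div_two F ha, density_eq_density_subfamilies_div_two _ hb,
    density_eq_density_subfamilies_div_two (F.nonMemberSubfamily a) hb]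
  ring

lemma density_le_of_wiseUnion_two (hF : ∀ E ∈ F, E ⊆ X) (hZX : Z ⊆ X)
    (hZ : ∀ E ∈ F, Disjoint E Z) (hU : WiseUnion 2 (#Z + 1) X F) :
    density X F ≤ 1 / 2 / 2 ^ #Z := by
  have hcard := (card_sdiff_add_card_eq_card hZX).symm
  have hU' := hU.restrict (Y := X \ Z) sdiff_subset hcard.le
  rw [Nat.add_sub_cancel_left] at hU'
  rw [density_eq_div_two_pow hcard]
  gcongr
  exact density_le_half_of_wiseUnion (fun E hE ↦ subset_sdiff.2 ⟨hF E hE, hZ E hE⟩) hU'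

namespace IsShiftedComplex

lemma nonMemberSubfamily_memberSubfamily_subset (hF : IsShiftedComplex X F) (hy : y ∈ X)
    (hyx : y < x) :
    (F.memberSubfamily x).nonMemberSubfamily y ⊆ (F.nonMemberSubfamily x).memberSubfamily y := by
  intro E hE
  simp only [mem_nonMemberSubfamily, mem_memberSubfamily] at hE ⊢
  obtain ⟨⟨hxE, hx⟩, hyE⟩ := hE
  have hshift := hF.shift _ hxE x (mem_insert_self x E) y hy (by grind) hyx
  rw [erase_insert hx] at hshift
  exact ⟨⟨hshift, by grind⟩, hyE⟩

lemma density_traces_memberSubfamily_le (hF : IsShiftedComplex X F) (hU : WiseUnion 3 1 X F)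
    (hx : x ∈ X) (ha : a ∈ X) (hax : a < x) (hb : b ∈ X) (hba : b < a)
    (hY : Y = ((X.erase x).erase a).erase b) (h₀ : ∅ ∈ F.memberSubfamily x)
    (h₁ : ∀ y ∈ Y, {y} ∈ F.memberSubfamily x) :
    density Y (((F.memberSubfamily x).nonMemberSubfamily a).nonMemberSubfamily b) +
      density Y (((F.nonMemberSubfamily x).memberSubfamily a).nonMemberSubfamily b) +
      density Y (((F.nonMemberSubfamily x).nonMemberSubfamily a).memberSubfamily b) ≤ 9 / 8 := by
  have hAB : ((F.memberSubfamily x).nonMemberSubfamily a).nonMemberSubfamily b ⊆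
      ((F.nonMemberSubfamily x).memberSubfamily a).nonMemberSubfamily b :=
    filter_subset_filter _ (hF.nonMemberSubfamily_memberSubfamily_subset ha hax)
  have hAC := hAB.trans ((hF.nonMemberSubfamily x).nonMemberSubfamily_memberSubfamily_subset
    (mem_erase.2 ⟨(hba.trans hax).ne, hb⟩) hba)
  have hA := ((hF.memberSubfamily x).nonMemberSubfamily a).nonMemberSubfamily b
  have hB := ((hF.nonMemberSubfamily x).memberSubfamily a).nonMemberSubfamily b
  have hC := ((hF.nonMemberSubfamily x).nonMemberSubfamily a).memberSubfamily b
  have hA₀ : ∅ ∈ ((F.memberSubfamily x).nonMemberSubfamily a).nonMemberSubfamily b := by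
    simpa [mem_nonMemberSubfamily] using h₀
  have hA₁ : ∀ y ∈ Y, {y} ∈ ((F.memberSubfamily x).nonMemberSubfamily a).nonMemberSubfamily b :=
    fun y hy ↦ by have := h₁ y hy; simp only [mem_nonMemberSubfamily]; grind
  subst hY
  refine density_add_density_add_density_le hA.isLowerSet hB.isLowerSet hA.subset hB.subset
    hC.subset hA₁ (fun y hy ↦ hAC (hA₁ y hy)) hA₀ (hAB hA₀) (hAC hA₀)
    fun E₁ h₁ E₂ h₂ E₃ h₃ hE ↦ ?_
  simp only [mem_nonMemberSubfamily, mem_memberSubfamily] at h₁ h₂ h₃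
  refine hU.union_union_ne h₁.1.1.1 h₂.1.1.1 h₃.1.1.1 ?_
  ext z
  have := congrArg (z ∈ ·) hE
  grind

lemma density_traces_nonMemberSubfamily_le (hF : IsShiftedComplex X F) (hU : WiseUnion 3 1 X F)
    (hU' : WiseUnion 2 3 X F) (hx : x ∈ X) (ha : a ∈ X) (hb : b ∈ X)
    (hY : Y = ((X.erase x).erase a).erase b) (hF₀ : ∅ ∈ F)
    (hF₁ : ∀ y ∈ X, {y} ∈ F) (h₁ : ∀ y ∈ Y, {y} ∈ F.memberSubfamily x) :
    density Y (((F.memberSubfamily x).nonMemberSubfamily a).nonMemberSubfamily b) +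
      density Y (((F.nonMemberSubfamily x).memberSubfamily a).memberSubfamily b) +
      density Y (((F.nonMemberSubfamily x).nonMemberSubfamily a).nonMemberSubfamily b) ≤
        9 / 8 := by
  have hA := ((hF.memberSubfamily x).nonMemberSubfamily a).nonMemberSubfamily b
  have hB := ((hF.nonMemberSubfamily x).memberSubfamily a).memberSubfamily b
  have hC := ((hF.nonMemberSubfamily x).nonMemberSubfamily a).nonMemberSubfamily b
  subst hY
  obtain hB₀ | hB₀ :=
    (((F.nonMemberSubfamily x).memberSubfamily a).memberSubfamily b).eq_empty_or_nonempty
  · have hsum := density_add_density_le_one hA.subset hC.subset fun E₁ h₁ E₂ h₂ hE ↦ by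
      simp only [mem_nonMemberSubfamily, mem_memberSubfamily] at h₁ h₂
      have hle := hU' _ (.succ h₁.1.1.1 (.succ h₂.1.1.1 .zero))
      have hsub : X \ (insert x E₁ ∪ (E₂ ∪ ∅)) ⊆ {a, b} := by
        intro z
        have := congrArg (z ∈ ·) hE
        grind
      have := (card_le_card hsub).trans card_le_two
      omega
    rw [hB₀, density_empty]
    linarith
  · refine density_add_density_add_density_le hA.isLowerSet hB.isLowerSet hA.subset hB.subset
      hC.subset ?_ ?_ ?_ (hB.empty_mem hB₀) ?_ fun E₁ h₁ E₂ h₂ E₃ h₃ hE ↦ ?_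
    · intro y hy
      have := h₁ y hy
      simp only [mem_nonMemberSubfamily]
      grind
    · intro y hy
      have := hF₁ y (by grind)
      simp only [mem_nonMemberSubfamily]
      grind
    · simpa [mem_nonMemberSubfamily, mem_memberSubfamily] using hF₁ x hx
    · simpa [mem_nonMemberSubfamily] using hF₀
    · simp only [mem_nonMemberSubfamily, mem_memberSubfamily] at h₁ h₂ h₃
      refine hU.union_union_ne h₁.1.1.1 h₂.1.1.1 h₃.1.1.1 ?_
      ext z
      have := congrArg (z ∈ ·) hE
      grind

lemma density_le_of_singleton_notMem (hF : IsShiftedComplex X F) (hU : WiseUnion 2 4 X F)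
    (ha : a ∈ X) (hmax : ∀ z ∈ X, z ≤ a) (hb : b ∈ X.erase a) (hmaxb : ∀ z ∈ X.erase a, z ≤ b)
    (hy : y ∈ (X.erase a).erase b) (hyF : {y} ∉ F) : density X F ≤ 1 / 16 := by
  rw [mem_erase, mem_erase] at hy
  rw [mem_erase] at hb
  have hnotMem : ∀ z, y ≤ z → ∀ E ∈ F, z ∉ E := by
    intro z hyz E hE hzE
    have hz := hF.isLowerSet (singleton_subset_iff.2 hzE) hE
    obtain rfl | hne := eq_or_ne y z
    · exact hyF hz
    · have hshift := hF.shift _ hz z (mem_singleton_self z) y hy.2.2 (by simpa using hne)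
        (hyz.lt_of_ne hne)
      exact hyF (by simpa using hshift)
  have hcard : #{a, b, y} = 3 := card_eq_three.2 ⟨a, b, y, hb.1.symm, hy.2.1.symm, hy.1.symm, rfl⟩
  have hle := density_le_of_wiseUnion_two (Z := {a, b, y}) hF.subset (by grind)
    (fun E hE ↦ ?_) (by rwa [hcard])
  · rw [hcard] at hle
    norm_num at hle
    exact hle
  · have hya := hnotMem a (hmax y hy.2.2) E hE
    have hyb := hnotMem b (hmaxb y (mem_erase.2 hy.2)) E hE
    have hyy := hnotMem y le_rfl E hE
    simp [disjoint_right, hya, hyb, hyy]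

end IsShiftedComplex

namespace ShiftedBound

lemma four_mul_density_le (hk : ShiftedBound α k) (hX : #X ≤ k) (hF : IsShiftedComplex X F)
    (hU : WiseUnion 3 3 X F) (ha : a ∈ X) (hmax : ∀ z ∈ X, z ≤ a) (hb : b ∈ X.erase a)
    (hmaxb : ∀ z ∈ X.erase a, z ≤ b) :
    4 * density X F ≤ 10 / 64 + 625 / 32768 +
      density ((X.erase a).erase b) ((F.nonMemberSubfamily a).nonMemberSubfamily b) := by
  have hY : #((X.erase a).erase b) ≤ k := (card_erase_le.trans card_erase_le).trans hX
  have hmem := hF.memberSubfamily a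
  have hnonMem := hF.nonMemberSubfamily a
  have hUmem : WiseUnion 3 5 (X.erase a) (F.memberSubfamily a) :=
    hF.wiseUnion_memberSubfamily hmax (by norm_num) hU
  have hUnonMem : WiseUnion 3 2 (X.erase a) (F.nonMemberSubfamily a) := hU.nonMemberSubfamily a
  have h₁₁ := hk.density_le_of_wiseUnion_three 4 hY (hmem.memberSubfamily b)
    (hmem.wiseUnion_memberSubfamily hmaxb (by norm_num) hUmem)
  have h₁₀ := hk.density_le_of_wiseUnion_three 1 hY (hmem.nonMemberSubfamily b)
    (hUmem.nonMemberSubfamily b)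
  have h₀₁ := hk.density_le_of_wiseUnion_three 1 hY (hnonMem.memberSubfamily b)
    (hnonMem.wiseUnion_memberSubfamily hmaxb (by norm_num) hUnonMem)
  rw [density_eq_density_subfamilies_div_four F ha hb]
  linarith

lemma density_subfamilies_le (hk : ShiftedBound α k) (hX : #X ≤ k) (hF : IsShiftedComplex X F)
    (h₀ : ∅ ∈ F) (h₁ : ∀ y ∈ X, {y} ∈ F) (hU : WiseUnion 3 1 X F) (hU' : WiseUnion 2 3 X F)
    (hx : x ∈ X) (hmax : ∀ y ∈ X, y ≤ x) :
    8 * density (X.erase x) (F.nonMemberSubfamily x) +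
        16 * density (X.erase x) (F.memberSubfamily x) ≤ 9 / 2 + 4 * (10 / 64 + 625 / 32768) ∨
      density (X.erase x) (F.memberSubfamily x) ≤ 1 / 16 ∧
        density (X.erase x) (F.nonMemberSubfamily x) ≤ 1 / 2 := by
  have hcard : 4 ≤ #X := (((hU.succ_of_singleton_mem h₀ h₁ (by norm_num)).succ_of_singleton_mem
    h₀ h₁ (by norm_num)).succ_of_singleton_mem h₀ h₁ (by norm_num)).le_card h₀
  have hcx := card_erase_add_one hx
  obtain ⟨a, ha, hmaxa⟩ := (X.erase x).exists_max_image id (card_pos.1 (by omega))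
  have hca := card_erase_add_one ha
  obtain ⟨b, hb, hmaxb⟩ := ((X.erase x).erase a).exists_max_image id (card_pos.1 (by omega))
  obtain ⟨hax, haX⟩ := mem_erase.1 ha
  obtain ⟨hba, hbX'⟩ := mem_erase.1 hb
  have hbX := mem_of_mem_erase hbX'
  have hUmem : WiseUnion 3 3 (X.erase x) (F.memberSubfamily x) :=
    hF.wiseUnion_memberSubfamily hmax le_rfl hU
  have hUmem' : WiseUnion 2 4 (X.erase x) (F.memberSubfamily x) :=
    hF.wiseUnion_memberSubfamily hmax (by norm_num) hU'
  by_cases hsing : ∀ y ∈ ((X.erase x).erase a).erase b, {y} ∈ F.memberSubfamily x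
  · left
    have hmem₀ : ∅ ∈ F.memberSubfamily x := by simpa [mem_memberSubfamily] using h₁ x hx
    have h₁₀ := hF.density_traces_memberSubfamily_le hU hx haX ((hmax a haX).lt_of_ne hax) hbX
      ((hmaxa b hbX').lt_of_ne hba) rfl hmem₀ hsing
    have h₁₁ := hF.density_traces_nonMemberSubfamily_le hU hU' hx haX hbX rfl h₀ h₁ hsing
    have hle := hk.four_mul_density_le (by omega) (hF.memberSubfamily x) hUmem ha hmaxa hb hmaxb
    rw [density_eq_density_subfamilies_div_four (F.nonMemberSubfamily x) ha hb]
    linarith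
  · right
    push Not at hsing
    obtain ⟨y, hy, hyF⟩ := hsing
    exact ⟨(hF.memberSubfamily x).density_le_of_singleton_notMem hUmem' ha hmaxa hb hmaxb hy hyF,
      density_le_half_of_wiseUnion (hF.nonMemberSubfamily x).subset
        ((hU'.nonMemberSubfamily x).of_le (by norm_num))⟩

lemma density_lt_of_wiseUnion_three_two (hk : ShiftedBound α k) (hX : #X ≤ k + 1)
    (hF : IsShiftedComplex X F) (h₀ : ∅ ∈ F) (h₁ : ∀ x ∈ X, {x} ∈ F) (hU : WiseUnion 3 2 X F)
    (hU' : WiseUnion 2 4 X F) : density X F < 6 / 32 := by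
  have hcard := hU'.le_card h₀
  obtain ⟨x, hx, hmax⟩ := X.exists_max_image id (card_pos.1 (by omega))
  have hcx := card_erase_add_one hx
  obtain ⟨y, hy, hmaxy⟩ := (X.erase x).exists_max_image id (card_pos.1 (by omega))
  have hcy := card_erase_add_one hy
  obtain ⟨hne, hyX⟩ := mem_erase.1 hy
  have hyx : y < x := (hmax y hyX).lt_of_ne hne
  have hmem := hF.memberSubfamily x
  have hnonMem := hF.nonMemberSubfamily x
  have hUmem : WiseUnion 3 4 (X.erase x) (F.memberSubfamily x) :=
    hF.wiseUnion_memberSubfamily hmax (by norm_num) hU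
  have h₀₁ := hk.density_le_of_wiseUnion_three 0 (by omega) (hnonMem.memberSubfamily y)
    (hnonMem.wiseUnion_memberSubfamily hmaxy le_rfl (hU.nonMemberSubfamily x))
  have h₁₁ := hk.density_le_of_wiseUnion_three 3 (by omega) (hmem.memberSubfamily y)
    (hmem.wiseUnion_memberSubfamily hmaxy (by norm_num) hUmem)
  have h₁₀ := density_mono (X := (X.erase x).erase y)
    (hF.nonMemberSubfamily_memberSubfamily_subset hyX hyx)
  have h₀₀ := hk.density_subfamilies_le (by omega) hnonMem (by simp [mem_nonMemberSubfamily, h₀])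
    (fun z hz ↦ by
      simp only [mem_nonMemberSubfamily]
      grind) (hU.nonMemberSubfamily x) (hU'.nonMemberSubfamily x) hy hmaxy
  rw [density_eq_density_subfamilies_div_four F hx hy]
  norm_num at h₀₁ h₁₁ ⊢
  obtain h₀₀ | ⟨h₀₁', h₀₀⟩ := h₀₀ <;> linarith

lemma two_mul_density_le (hk : ShiftedBound α k) (hX : #X ≤ k) (hA : IsShiftedComplex X A)
    (hU : WiseUnion 3 4 X A) (hx : x ∈ X) (hmax : ∀ y ∈ X, y ≤ x)
    (hAB : A.nonMemberSubfamily x ⊆ B) :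
    2 * density X A ≤ 125 / 4096 + density (X.erase x) B := by
  have hmem := hk.density_le_of_wiseUnion_three 3 (card_erase_le.trans hX) (hA.memberSubfamily x)
    (hA.wiseUnion_memberSubfamily hmax (by norm_num) hU)
  have hnonMem := density_mono (X := X.erase x) hAB
  rw [density_eq_density_subfamilies_div_two A hx]
  linarith

lemma density_lt_of_wiseUnion_three_three (hk : ShiftedBound α k) (hX : #X ≤ k + 1)
    (hF : IsShiftedComplex X F) (h₀ : ∅ ∈ F) (h₁ : ∀ x ∈ X, {x} ∈ F) (hU : WiseUnion 3 3 X F)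
    (hU' : WiseUnion 2 5 X F) : density X F < 7 / 64 := by
  have hcard := hU'.le_card h₀
  obtain ⟨x, hx, hmax⟩ := X.exists_max_image id (card_pos.1 (by omega))
  have hcx := card_erase_add_one hx
  obtain ⟨y, hy, hmaxy⟩ := (X.erase x).exists_max_image id (card_pos.1 (by omega))
  have hcy := card_erase_add_one hy
  obtain ⟨hne, hyX⟩ := mem_erase.1 hy
  have hyx : y < x := (hmax y hyX).lt_of_ne hne
  obtain ⟨z, hz, hmaxz⟩ := ((X.erase x).erase y).exists_max_image id (card_pos.1 (by omega))
  obtain ⟨hne', hzX⟩ := mem_erase.1 hz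
  have hzy : z < y := (hmaxy z hzX).lt_of_ne hne'
  have hmem := hF.memberSubfamily x
  have hnonMem := hF.nonMemberSubfamily x
  have hUmem : WiseUnion 3 5 (X.erase x) (F.memberSubfamily x) :=
    hF.wiseUnion_memberSubfamily hmax (by norm_num) hU
  have hUnonMem : WiseUnion 3 2 (X.erase x) (F.nonMemberSubfamily x) := hU.nonMemberSubfamily x
  have hsub := hnonMem.nonMemberSubfamily_memberSubfamily_subset hzX hzy
  have hsub' := (filter_subset_filter (z ∉ ·)
    (hF.nonMemberSubfamily_memberSubfamily_subset hyX hyx)).trans hsub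
  have h₁₁ := hk.density_le_of_wiseUnion_three 4 (by omega) (hmem.memberSubfamily y)
    (hmem.wiseUnion_memberSubfamily hmaxy (by norm_num) hUmem)
  have h₁₀ := hk.two_mul_density_le (by omega) (hmem.nonMemberSubfamily y)
    (hUmem.nonMemberSubfamily y) hz hmaxz hsub'
  have h₀₁ := hk.two_mul_density_le (by omega) (hnonMem.memberSubfamily y)
    (hnonMem.wiseUnion_memberSubfamily hmaxy (by norm_num) hUnonMem) hz hmaxz hsub
  have h₀₀ := hk.density_le_of_wiseUnion_three 0 ((card_erase_le (a := z)).trans (by omega))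
    ((hnonMem.nonMemberSubfamily y).memberSubfamily z)
    ((hnonMem.nonMemberSubfamily y).wiseUnion_memberSubfamily hmaxz le_rfl
      (hUnonMem.nonMemberSubfamily y))
  have h := hk.density_subfamilies_le (by omega) (hnonMem.nonMemberSubfamily y)
    (by simp [mem_nonMemberSubfamily, h₀])
    (fun w hw ↦ by
      simp only [mem_nonMemberSubfamily]
      grind) (hUnonMem.nonMemberSubfamily y) ((hU'.nonMemberSubfamily x).nonMemberSubfamily y)
      hz hmaxz
  rw [density_eq_density_subfamilies_div_four F hx hy,
    density_eq_density_subfamilies_div_two ((F.nonMemberSubfamily x).nonMemberSubfamily y) hz]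
  norm_num at h₁₁ h₀₀ ⊢
  obtain h | ⟨h, h'⟩ := h <;> linarith

end ShiftedBound

end RankThree

section AlmostDisjoint

variable {α : Type*} {X A Z E : Finset α} {F F' : Finset (Finset α)}

lemma card_powerset_filter_card_le_one (A : Finset α) : #{B ∈ A.powerset | #B ≤ 1} = #A + 1 := by
  classical
  have h : {B ∈ A.powerset | #B ≤ 1} = A.powersetCard 0 ∪ A.powersetCard 1 := by
    ext B
    grind
  rw [h, card_union_of_disjoint (pairwise_disjoint_powersetCard A zero_ne_one), card_powersetCard,
    card_powersetCard, Nat.choose_zero_right, Nat.choose_one_right, add_comm]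

lemma eq_of_subset_of_density_le (h : F ⊆ F') (hd : density X F' ≤ density X F) : F = F' := by
  refine eq_of_subset_of_card_le h ?_
  rw [density, density, div_le_div_iff_of_pos_right (by positivity)] at hd
  exact_mod_cast hd

variable [DecidableEq α]

/-- The extremal family of the theorem before taking symmetric differences: the subsets of `X` that
meet `A` in at most one point. -/
def almostDisjoint (X A : Finset α) : Finset (Finset α) := {E ∈ X.powerset | #(E ∩ A) ≤ 1}

lemma mem_almostDisjoint : E ∈ almostDisjoint X A ↔ E ⊆ X ∧ #(E ∩ A) ≤ 1 := by
  simp [almostDisjoint]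

lemma card_almostDisjoint (hA : A ⊆ X) :
    #(almostDisjoint X A) = (#A + 1) * 2 ^ #(X \ A) := by
  rw [← card_powerset_filter_card_le_one, ← card_powerset, ← card_product]
  refine card_nbij' (fun E ↦ (E ∩ A, E \ A)) (fun p ↦ p.1 ∪ p.2) ?_ ?_ ?_ ?_
  · intro E hE
    have := mem_almostDisjoint.1 hE
    grind
  · rintro ⟨B, C⟩ h
    simp only [coe_product, Set.mem_prod, mem_coe, mem_filter, mem_powerset] at h
    obtain ⟨⟨hB, hB₁⟩, hC⟩ := h
    have hBC : (B ∪ C) ∩ A = B := by grind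
    refine mem_almostDisjoint.2 ⟨union_subset (hB.trans hA) (hC.trans sdiff_subset), ?_⟩
    rwa [hBC]
  · intro E _
    exact sup_inf_sdiff E A
  · rintro ⟨B, C⟩ h
    ext1 <;> grind

lemma density_almostDisjoint (hA : A ⊆ X) :
    density X (almostDisjoint X A) = (#A + 1) / 2 ^ #A := by
  rw [density, card_almostDisjoint hA, ← card_sdiff_add_card_eq_card hA, pow_add]
  push_cast
  field_simp

lemma density_powerset_sdiff (hZ : Z ⊆ X) : density X (X \ Z).powerset = 1 / 2 ^ #Z := by
  rw [density, card_powerset, ← card_sdiff_add_card_eq_card hZ, pow_add]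
  push_cast
  field_simp

end AlmostDisjoint

section ShiftedExtremal

variable {α : Type*} [LinearOrder α] {X Z : Finset α} {F : Finset (Finset α)} {x : α} {k r t : ℕ}

namespace IsShiftedComplex

lemma exists_disjoint_memberSubfamily (hF : IsShiftedComplex X F) (h₀ : ∅ ∈ F)
    (h₁ : ∀ y ∈ X, {y} ∈ F) (ht : 1 ≤ t) (hU : WiseUnion (r + 1) t X F)
    (hU' : ¬ WiseUnion r (t + 2) X F) (hmax : ∀ y ∈ X, y ≤ x) :
    ∃ C ⊆ X.erase x, #C = t ∧ ∀ E ∈ F.memberSubfamily x, Disjoint E C := by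
  unfold WiseUnion at hU'
  push Not at hU'
  obtain ⟨U, hFU, hlt⟩ := hU'
  have hcard : #(X \ U) = t + 1 := by
    have := hU.succ_of_singleton_mem h₀ h₁ ht U hFU
    omega
  have hpair : ∀ p ∈ X \ U, ∀ c ∈ (X \ U).erase p, {p, c} ∉ F := by
    intro p hp c hc hpc
    have hle := hU _ (.succ hpc hFU)
    rw [show X \ ({p, c} ∪ U) = ((X \ U).erase p).erase c by grind, card_erase_of_mem hc,
      card_erase_of_mem hp] at hle
    omega
  obtain ⟨C, hC, hCt⟩ : ∃ C ⊆ (X \ U).erase x, #C = t := exists_subset_card_eq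
    (by have := pred_card_le_card_erase (s := X \ U) (a := x); omega)
  refine ⟨C, hC.trans (erase_subset_erase _ sdiff_subset), hCt, fun E hE ↦
    disjoint_left.2 fun p hpE hpC ↦ ?_⟩
  obtain ⟨hpx, hpU⟩ := mem_erase.1 (hC hpC)
  have hpxF : {p, x} ∈ F := hF.isLowerSet (by grind) (mem_memberSubfamily.1 hE).1
  by_cases hxU : x ∈ X \ U
  · exact hpair p hpU x (mem_erase.2 ⟨hpx.symm, hxU⟩) hpxF
  · obtain ⟨c, hc⟩ := card_pos.1 (show 0 < #((X \ U).erase p) by rw [card_erase_of_mem hpU]; omega)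
    obtain ⟨hcp, hcU⟩ := mem_erase.1 hc
    have hcX := (mem_sdiff.1 hcU).1
    have hcx : c ≠ x := ne_of_mem_of_not_mem hcU hxU
    have hshift := hF.shift _ hpxF x (by simp) c hcX (by simp [hcp, hcx])
      ((hmax c hcX).lt_of_ne hcx)
    rw [show insert c (({p, x} : Finset α).erase x) = {p, c} by grind] at hshift
    exact hpair p hpU c hc hshift

end IsShiftedComplex

namespace ShiftedBound

lemma density_lt_of_wiseUnion_add_two (hk : ShiftedBound α k) (hr : 2 ≤ r) (hX : #X ≤ k + 1)
    (ht : r + 1 + t + 2 ≤ 2 ^ (r + 1)) (hbig : 2 ^ (r + 1) < r + 1 + (r + t) + 2)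
    (hF : IsShiftedComplex X F) (h₀ : ∅ ∈ F) (h₁ : ∀ y ∈ X, {y} ∈ F)
    (hU : WiseUnion (r + 1) t X F) (hU' : WiseUnion r (t + 2) X F) :
    density X F < (r + 1 + t + 1 : ℚ) / 2 ^ (r + 1 + t) := by
  obtain rfl | hr := hr.eq_or_lt
  · obtain rfl | rfl : t = 2 ∨ t = 3 := by omega
    · exact (hk.density_lt_of_wiseUnion_three_two hX hF h₀ h₁ hU hU').trans_eq (by norm_num)
    · exact (hk.density_lt_of_wiseUnion_three_three hX hF h₀ h₁ hU hU').trans_eq (by norm_num)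
  · exact hk.density_lt_of_two_pow_lt hr hX ht hbig hF h₀ hU hU'

lemma density_memberSubfamily_lt_or_exists_disjoint (hk : ShiftedBound α k) (hr : 2 ≤ r)
    (ht₁ : 1 ≤ t) (hX : #X ≤ k + 1) (hF : IsShiftedComplex X F) (h₀ : ∅ ∈ F)
    (h₁ : ∀ y ∈ X, {y} ∈ F) (hU : WiseUnion (r + 1) t X F) (hU' : ¬ WiseUnion r (t + 2) X F)
    (hx : x ∈ X) (hmax : ∀ y ∈ X, y ≤ x) :
    density (X.erase x) (F.memberSubfamily x) < 1 / 2 ^ (r + t) ∨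
      ∃ Z ⊆ X.erase x, #Z = r + t ∧ ∀ E ∈ F.memberSubfamily x, Disjoint E Z := by
  have hcx := card_erase_add_one hx
  obtain ⟨C, hCX, hCt, hC⟩ := hF.exists_disjoint_memberSubfamily h₀ h₁ ht₁ hU hU' hmax
  have hcard := card_sdiff_add_card_eq_card hCX
  rw [hCt] at hcard
  have hUmem := (hF.wiseUnion_memberSubfamily hmax ht₁ hU).restrict
    (Y := X.erase x \ C) sdiff_subset hcard.ge
  rw [Nat.add_sub_cancel_left] at hUmem
  have hmem := (hF.memberSubfamily x).restrict (Y := X.erase x \ C) sdiff_subset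
    fun E hE ↦ subset_sdiff.2 ⟨(hF.memberSubfamily x).subset E hE, hC E hE⟩
  have hpow := two_mul_add_two_le_two_pow (r := r + 1) (by omega)
  obtain hlt | ⟨Z, hZX, hZr, hZ⟩ := hk.density_lt_or_exists_disjoint (by omega)
    (show r + 1 + r + 2 ≤ 2 ^ (r + 1) by omega) (by omega) hmem hUmem
  · left
    rw [density_eq_div_two_pow hcard.symm, pow_add, ← div_div]
    gcongr
  · obtain ⟨hZX, hZC⟩ := subset_sdiff.1 hZX
    exact .inr ⟨Z ∪ C, union_subset hZX hCX, by rw [card_union_of_disjoint hZC, hZr, hCt],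
      fun E hE ↦ disjoint_union_right.2 ⟨hZ E hE, hC E hE⟩⟩

lemma density_lt_or_exists_disjoint_memberSubfamily (hk : ShiftedBound α k) (hr : 2 ≤ r)
    (ht₁ : 1 ≤ t) (ht : r + 1 + t + 2 ≤ 2 ^ (r + 1)) (hX : #X ≤ k + 1)
    (hF : IsShiftedComplex X F) (h₀ : ∅ ∈ F) (h₁ : ∀ y ∈ X, {y} ∈ F)
    (hU : WiseUnion (r + 1) t X F) (hx : x ∈ X) (hmax : ∀ y ∈ X, y ≤ x) :
    density X F < (r + 1 + t + 1 : ℚ) / 2 ^ (r + 1 + t) ∨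
      density (X.erase x) (F.memberSubfamily x) < 1 / 2 ^ (r + t) ∨
        ∃ Z ⊆ X.erase x, #Z = r + t ∧ ∀ E ∈ F.memberSubfamily x, Disjoint E Z := by
  have hcx := card_erase_add_one hx
  by_cases hbig : r + 1 + (r + t) + 2 ≤ 2 ^ (r + 1)
  · exact .inr (hk.density_lt_or_exists_disjoint (by omega) hbig (by omega) (hF.memberSubfamily x)
      (by rw [add_comm r t]; exact hF.wiseUnion_memberSubfamily hmax ht₁ hU))
  by_cases hU' : WiseUnion r (t + 2) X F
  · exact .inl (hk.density_lt_of_wiseUnion_add_two hr hX ht (by omega) hF h₀ h₁ hU hU')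
  · exact .inr (hk.density_memberSubfamily_lt_or_exists_disjoint hr ht₁ hX hF h₀ h₁ hU hU' hx hmax)

lemma density_nonMemberSubfamily_le (hk : ShiftedBound α k) (hr : 2 ≤ r) (ht₁ : 1 ≤ t)
    (ht : r + 1 + t + 2 ≤ 2 ^ (r + 1)) (hX : #X ≤ k + 1) (hF : IsShiftedComplex X F)
    (h₀ : ∅ ∈ F) (h₁ : ∀ y ∈ X, {y} ∈ F) (hU : WiseUnion (r + 1) t X F) (hx : x ∈ X) :
    density (X.erase x) (F.nonMemberSubfamily x) ≤ (r + 1 + t : ℚ) / 2 ^ (r + t) := by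
  have hcx := card_erase_add_one hx
  have hnonMem := hF.nonMemberSubfamily x
  have hnonMem₁ : ∀ y ∈ X.erase x, {y} ∈ F.nonMemberSubfamily x := fun y hy ↦ by
    rw [mem_erase] at hy
    simpa [mem_nonMemberSubfamily, hy.1.symm] using h₁ y hy.2
  obtain ht₂ | ht₂ := ht₁.lt_or_eq
  · obtain ⟨s, rfl⟩ : ∃ s, t = s + 1 := ⟨t - 1, by omega⟩
    refine (hk _ _ (by omega) (r + 1) s (by omega) (by omega) (by omega) hnonMem hnonMem₁
      (hU.nonMemberSubfamily x)).trans_eq ?_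
    rw [show r + (s + 1) = r + 1 + s by ring]
    push_cast
    ring
  subst ht₂
  have hU' := (hU.succ_of_singleton_mem h₀ h₁ le_rfl).nonMemberSubfamily x
  obtain rfl | hr₃ := hr.eq_or_lt
  · exact (density_le_half_of_wiseUnion hnonMem.subset hU').trans_eq (by norm_num)
  · have hpow := two_mul_add_two_le_two_pow hr₃
    refine (hk _ _ (by omega) r 1 hr₃ le_rfl (by omega) hnonMem hnonMem₁ hU').trans_eq ?_
    push_cast
    ring

lemma density_le_and_exists_memberSubfamily_eq (hk : ShiftedBound α k) (hr : 2 ≤ r)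
    (ht₁ : 1 ≤ t) (ht : r + 1 + t + 2 ≤ 2 ^ (r + 1)) (hX : #X ≤ k + 1)
    (hF : IsShiftedComplex X F) (h₀ : ∅ ∈ F) (h₁ : ∀ y ∈ X, {y} ∈ F)
    (hU : WiseUnion (r + 1) t X F) :
    density X F ≤ (r + 1 + t + 1 : ℚ) / 2 ^ (r + 1 + t) ∧
      (density X F = (r + 1 + t + 1 : ℚ) / 2 ^ (r + 1 + t) → ∃ x ∈ X, ∃ Z ⊆ X.erase x,
        #Z = r + t ∧ F.memberSubfamily x = (X.erase x \ Z).powerset) := by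
  have hcard := hU.le_card h₀
  obtain ⟨x, hx, hmax⟩ := X.exists_max_image id (card_pos.1 (by omega))
  have hnonMem := hk.density_nonMemberSubfamily_le hr ht₁ ht hX hF h₀ h₁ hU hx
  have hsplit := density_eq_density_subfamilies_div_two F hx
  have hbound : (r + 1 + t + 1 : ℚ) / 2 ^ (r + 1 + t) =
      (1 / 2 ^ (r + t) + (r + 1 + t : ℚ) / 2 ^ (r + t)) / 2 := by
    rw [show r + 1 + t = r + t + 1 by ring, pow_succ]
    field_simp
    ring
  obtain hlt | hlt | ⟨Z, hZX, hZr, hZ⟩ :=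
    hk.density_lt_or_exists_disjoint_memberSubfamily hr ht₁ ht hX hF h₀ h₁ hU hx hmax
  · exact ⟨hlt.le, fun h ↦ absurd h hlt.ne⟩
  · have : density X F < (r + 1 + t + 1 : ℚ) / 2 ^ (r + 1 + t) := by linarith
    exact ⟨this.le, fun h ↦ absurd h this.ne⟩
  · have hmem := density_le_of_disjoint (hF.memberSubfamily x).subset hZX hZ
    rw [hZr] at hmem
    have hsub : F.memberSubfamily x ⊆ (X.erase x \ Z).powerset := fun E hE ↦
      mem_powerset.2 (subset_sdiff.2 ⟨(hF.memberSubfamily x).subset E hE, hZ E hE⟩)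
    refine ⟨by linarith, fun h ↦ ⟨x, hx, Z, hZX, hZr,
      eq_of_subset_of_density_le (X := X.erase x) hsub ?_⟩⟩
    rw [density_powerset_sdiff hZX, hZr]
    linarith

end ShiftedBound

theorem shiftedBound (α : Type*) [LinearOrder α] (k : ℕ) : ShiftedBound α k := by
  induction k with
  | zero =>
    intro X F hX r t _ ht₁ _ hF _ hU
    obtain rfl | hF₀ := F.eq_empty_or_nonempty
    · rw [density_empty]
      positivity
    · have := hU.le_card (hF.empty_mem hF₀)
      omega
  | succ k ih =>
    intro X F hX r t hr ht₁ ht hF h₁ hU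
    obtain rfl | hF₀ := F.eq_empty_or_nonempty
    · rw [density_empty]
      positivity
    obtain ⟨r, rfl⟩ : ∃ s, r = s + 1 := ⟨r - 1, by omega⟩
    have := (ih.density_le_and_exists_memberSubfamily_eq (by omega) ht₁ ht hX hF (hF.empty_mem hF₀)
      h₁ hU).1
    exact_mod_cast this

lemma WiseUnion.subset_almostDisjoint (hU : WiseUnion (r + 1) t X F) (hr : 1 ≤ r) (ht₁ : 1 ≤ t)
    (hF : ∀ E ∈ F, E ⊆ X) (hF' : IsLowerSet (F : Set (Finset α))) (h₁ : ∀ y ∈ X, {y} ∈ F)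
    (hZX : Z ⊆ X.erase x) (hZ : #Z = r + t)
    (hx : F.memberSubfamily x = (X.erase x \ Z).powerset) :
    F ⊆ almostDisjoint X (insert x Z) := by
  intro E hE
  refine mem_almostDisjoint.2 ⟨hF E hE, ?_⟩
  by_cases hxE : x ∈ E
  · have hmem : E.erase x ∈ F.memberSubfamily x :=
      mem_memberSubfamily.2 ⟨by rwa [insert_erase hxE], notMem_erase x E⟩
    rw [hx, mem_powerset] at hmem
    have hsub : E ∩ insert x Z ⊆ {x} := by
      intro z hz
      have := @hmem z
      grind
    exact (card_le_card hsub).trans_eq (card_singleton x)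
  · by_contra! hlt
    obtain ⟨B, hBE, hB⟩ := exists_subset_card_eq hlt
    have hBF : B ∈ F := hF' (hBE.trans inter_subset_left) hE
    have hcard := card_sdiff_of_subset (show B ⊆ Z by grind)
    obtain ⟨S, hSB, hS⟩ := exists_subset_card_eq (s := Z \ B) (n := r - 1) (by omega)
    have hxF : insert x (X.erase x \ Z) ∈ F :=
      (mem_memberSubfamily.1 (by rw [hx]; exact mem_powerset_self _)).1
    have hunion := IsUnionOf.succ hBF (.succ hxF (isUnionOf_card_of_singleton_mem (U := S)
      fun y hy ↦ h₁ y (by grind)))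
    rw [show #S + 1 + 1 = r + 1 by omega] at hunion
    have hle := (hU _ hunion).trans (card_le_card
      (show X \ (B ∪ (insert x (X.erase x \ Z) ∪ S)) ⊆ (Z \ B) \ S by grind))
    rw [card_sdiff_of_subset hSB] at hle
    omega

theorem IsShiftedComplex.density_le_and_eq_almostDisjoint (hF : IsShiftedComplex X F) (hr : 3 ≤ r)
    (ht₁ : 1 ≤ t) (ht : r + t + 2 ≤ 2 ^ r) (h₁ : ∀ y ∈ X, {y} ∈ F) (hU : WiseUnion r t X F) :
    density X F ≤ (r + t + 1 : ℚ) / 2 ^ (r + t) ∧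
      (density X F = (r + t + 1 : ℚ) / 2 ^ (r + t) →
        ∃ A ⊆ X, #A = r + t ∧ F = almostDisjoint X A) := by
  refine ⟨shiftedBound α #X X F le_rfl r t hr ht₁ ht hF h₁ hU, fun hd ↦ ?_⟩
  have hF₀ : F.Nonempty := by
    rw [nonempty_iff_ne_empty]
    rintro rfl
    rw [density_empty] at hd
    have : (0 : ℚ) < (r + t + 1 : ℚ) / 2 ^ (r + t) := by positivity
    exact this.ne hd
  obtain ⟨r, rfl⟩ : ∃ s, r = s + 1 := ⟨r - 1, by omega⟩
  obtain ⟨x, hx, Z, hZX, hZ, hmem⟩ :=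
    ((shiftedBound α #X).density_le_and_exists_memberSubfamily_eq (by omega) ht₁ ht (by omega) hF
      (hF.empty_mem hF₀) h₁ hU).2 (by exact_mod_cast hd)
  have hA : insert x Z ⊆ X := insert_subset hx (hZX.trans (erase_subset _ _))
  have hcard : #(insert x Z) = r + 1 + t := by
    rw [card_insert_of_notMem fun h ↦ notMem_erase x X (hZX h), hZ]
    ring
  refine ⟨insert x Z, hA, hcard, eq_of_subset_of_density_le (X := X) (hU.subset_almostDisjoint
    (by omega) ht₁ hF.subset hF.isLowerSet h₁ hZX hZ hmem) ?_⟩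
  rw [density_almostDisjoint hA, hcard, hd]
  push_cast
  rfl

end ShiftedExtremal

section Shift

variable {α : Type*} [DecidableEq α] {i j z : α} {X E U V : Finset α} {F : Finset (Finset α)}
  {r t : ℕ}

/-- The image of `E` under the transposition of `i` and `j`, which describes the shift
`𝓒 {i} {j}` symmetrically in the two points. -/
def swapAt (i j : α) (E : Finset α) : Finset α := E.image (Equiv.swap i j)

lemma mem_swapAt : z ∈ swapAt i j E ↔ Equiv.swap i j z ∈ E := by
  rw [swapAt, ← Equiv.coe_toEmbedding, ← map_eq_image, mem_map_equiv, Equiv.symm_swap,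
    Equiv.toEmbedding_apply]

lemma card_swapAt (i j : α) (E : Finset α) : #(swapAt i j E) = #E :=
  card_image_of_injective _ (Equiv.injective _)

lemma swapAt_swapAt (i j : α) (E : Finset α) : swapAt i j (swapAt i j E) = E := by
  ext z
  rw [mem_swapAt, mem_swapAt, Equiv.swap_apply_self]

lemma swapAt_mono (h : E ⊆ V) : swapAt i j E ⊆ swapAt i j V := image_subset_image h

lemma swapAt_union (i j : α) (E V : Finset α) :
    swapAt i j (E ∪ V) = swapAt i j E ∪ swapAt i j V := image_union ..

lemma swapAt_inter (i j : α) (E V : Finset α) :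
    swapAt i j (E ∩ V) = swapAt i j E ∩ swapAt i j V :=
  image_inter _ _ (Equiv.injective _)

lemma swapAt_eq_self (h : i ∈ E ↔ j ∈ E) : swapAt i j E = E := by
  ext z
  grind [mem_swapAt]

lemma swapAt_eq_insert_erase (hj : j ∈ E) (hi : i ∉ E) :
    swapAt i j E = insert i (E.erase j) := by
  ext z
  grind [mem_swapAt]

lemma mem_compression_singleton (hij : i ≠ j) : E ∈ UV.compression {i} {j} F ↔
    E ∈ F ∧ swapAt i j E ∈ F ∨ i ∈ E ∧ j ∉ E ∧ (E ∈ F ∨ swapAt i j E ∈ F) := by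
  have hcompress (B : Finset α) : UV.compress {i} {j} B =
      if i ∉ B ∧ j ∈ B then swapAt i j B else B := by
    simp only [UV.compress, disjoint_singleton_left, singleton_subset_iff]
    split_ifs with h
    · rw [swapAt_eq_insert_erase h.2 h.1]
      grind
    · rfl
  have hi : i ∈ swapAt i j E ↔ j ∈ E := by simp [mem_swapAt]
  have hj : j ∈ swapAt i j E ↔ i ∈ E := by simp [mem_swapAt]
  rw [UV.mem_compression]
  simp only [hcompress]
  constructor
  · rintro (⟨hE, h⟩ | ⟨hE, B, hB, rfl⟩)
    · have := swapAt_eq_self (i := i) (j := j) (E := E)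
      grind
    · grind [swapAt_swapAt, mem_swapAt]
  · intro h
    have := swapAt_eq_self (i := i) (j := j) (E := E)
    by_cases hE : E ∈ F
    · grind
    · refine .inr ⟨hE, swapAt i j E, by grind, ?_⟩
      rw [if_pos (by grind), swapAt_swapAt]

lemma mem_or_swapAt_mem_compression (hij : i ≠ j) (h : E ∈ F) :
    E ∈ UV.compression {i} {j} F ∨ swapAt i j E ∈ UV.compression {i} {j} F := by
  have hi : i ∈ swapAt i j E ↔ j ∈ E := by simp [mem_swapAt]
  have hj : j ∈ swapAt i j E ↔ i ∈ E := by simp [mem_swapAt]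
  have := swapAt_eq_self (i := i) (j := j) (E := E)
  rw [mem_compression_singleton hij, mem_compression_singleton hij, swapAt_swapAt]
  grind

lemma isLowerSet_compression_singleton (hij : i ≠ j) (hF : IsLowerSet (F : Set (Finset α))) :
    IsLowerSet (UV.compression {i} {j} F : Set (Finset α)) := by
  intro E E' hsub hE
  have hle : E ∈ F → E' ∈ F := fun h ↦ hF hsub h
  have hswap : swapAt i j E ∈ F → swapAt i j E' ∈ F := fun h ↦ hF (swapAt_mono hsub) h
  have hself := swapAt_eq_self (i := i) (j := j) (E := E)
  have hself' := swapAt_eq_self (i := i) (j := j) (E := E')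
  rw [mem_coe, mem_compression_singleton hij] at hE ⊢
  grind

lemma singleton_mem_compression_singleton (hij : i ≠ j) (hi : i ∈ X) (h₁ : ∀ x ∈ X, {x} ∈ F) :
    ∀ x ∈ X, {x} ∈ UV.compression {i} {j} F := by
  intro x hx
  rw [mem_compression_singleton hij, swapAt, image_singleton]
  have := h₁ i hi
  have := h₁ x hx
  grind

lemma subset_of_mem_compression_singleton (hij : i ≠ j) (hi : i ∈ X) (hj : j ∈ X)
    (hF : ∀ E ∈ F, E ⊆ X) : ∀ E ∈ UV.compression {i} {j} F, E ⊆ X := by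
  intro E hE
  have hswap : swapAt i j E ∈ F → E ⊆ X := fun h ↦ by
    rw [← swapAt_swapAt i j E, ← swapAt_eq_self (i := i) (j := j) (E := X) (by simp [hi, hj])]
    exact swapAt_mono (hF _ h)
  rw [mem_compression_singleton hij] at hE
  grind

lemma IsUnionOf.of_subset (hF : IsLowerSet (F : Set (Finset α))) :
    ∀ {r : ℕ} {U V : Finset α}, IsUnionOf F r V → U ⊆ V → IsUnionOf F r U
  | 0, U, V, hV, hUV => by
    obtain _ | _ := hV
    rw [subset_empty.1 hUV]
    exact .zero
  | r + 1, U, V, hV, hUV => by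
    obtain _ | @⟨_, E, V, hE, hV⟩ := hV
    rw [← inter_eq_left.2 hUV, inter_union_distrib_left]
    exact .succ (hF inter_subset_right hE) (hV.of_subset hF inter_subset_right)

lemma IsUnionOf.of_compression_singleton (hij : i ≠ j) (hF : IsLowerSet (F : Set (Finset α)))
    (hU : IsUnionOf (UV.compression {i} {j} F) r U) :
    IsUnionOf F r U ∧ IsUnionOf F r (swapAt i j U) ∨
      i ∈ U ∧ (IsUnionOf F r U ∨ IsUnionOf F r (swapAt i j U)) := by
  induction hU with
  | zero => exact .inl ⟨.zero, .zero⟩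
  | @succ r E V hE _ ih =>
    have hmixed {B C : Finset α} (hB : i ∈ B) (hC : i ∈ C) : B ∪ C ⊆ B ∪ swapAt i j C := by
      intro z
      grind [mem_swapAt]
    have hle (hE : E ∈ F) (hV : IsUnionOf F r V) : IsUnionOf F (r + 1) (E ∪ V) := .succ hE hV
    have hswap (hE : swapAt i j E ∈ F) (hV : IsUnionOf F r (swapAt i j V)) :
        IsUnionOf F (r + 1) (swapAt i j (E ∪ V)) := by
      rw [swapAt_union]
      exact .succ hE hV
    have hright (hiE : i ∈ E) (hiV : i ∈ V) (hE : E ∈ F) (hV : IsUnionOf F r (swapAt i j V)) :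
        IsUnionOf F (r + 1) (E ∪ V) := (IsUnionOf.succ hE hV).of_subset hF (hmixed hiE hiV)
    have hleft (hiE : i ∈ E) (hiV : i ∈ V) (hE : swapAt i j E ∈ F) (hV : IsUnionOf F r V) :
        IsUnionOf F (r + 1) (E ∪ V) := (IsUnionOf.succ hE hV).of_subset hF (by
      rw [union_comm E, union_comm (swapAt i j E)]
      exact hmixed hiV hiE)
    rw [mem_compression_singleton hij] at hE
    rw [mem_union]
    grind

lemma WiseUnion.compression_singleton (hij : i ≠ j) (hi : i ∈ X) (hj : j ∈ X)
    (hF : IsLowerSet (F : Set (Finset α))) (hU : WiseUnion r t X F) :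
    WiseUnion r t X (UV.compression {i} {j} F) := by
  intro U hFU
  have h : IsUnionOf F r U ∨ IsUnionOf F r (swapAt i j U) := by
    have := hFU.of_compression_singleton hij hF
    tauto
  obtain h | h := h
  · exact hU U h
  · rw [← card_swapAt i j]
    convert hU _ h using 2
    ext z
    grind [mem_swapAt]

end Shift

section Unshift

variable {α : Type*} [DecidableEq α] {i j p a b : α} {X A B E : Finset α}
  {F : Finset (Finset α)} {r t : ℕ}

lemma subset_almostDisjoint_of_compression_eq (hij : i ≠ j) (hF : ∀ E ∈ F, E ⊆ X)
    (hA : i ∈ A ↔ j ∈ A) (h : UV.compression {i} {j} F = almostDisjoint X A) :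
    F ⊆ almostDisjoint X A := by
  intro E hE
  have hE' := mem_or_swapAt_mem_compression hij hE
  rw [h, mem_almostDisjoint, mem_almostDisjoint] at hE'
  refine mem_almostDisjoint.2 ⟨hF E hE, hE'.elim And.right fun hE' ↦ ?_⟩
  rw [← card_swapAt i j, swapAt_inter, swapAt_eq_self hA]
  exact hE'.2

lemma right_mem_of_compression_eq (hij : i ≠ j) (hj : j ∈ X) (hAX : A ⊆ X) (hA : 1 < #A)
    (hi : i ∈ A) (h : UV.compression {i} {j} F = almostDisjoint X A) : j ∈ A := by
  by_contra hjA
  obtain ⟨a, ha, hai⟩ := exists_mem_ne hA i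
  have haj : a ≠ j := ne_of_mem_of_not_mem ha hjA
  have hswap : swapAt i j {a, j} = {a, i} := by
    rw [swapAt_eq_insert_erase (by simp) (by grind)]
    grind
  have hmem : {a, j} ∈ UV.compression {i} {j} F := by
    rw [h, mem_almostDisjoint]
    have hsub : {a, j} ∩ A ⊆ {a} := by grind
    exact ⟨by grind, (card_le_card hsub).trans_eq (card_singleton a)⟩
  have hai' : {a, i} ∈ UV.compression {i} {j} F := by
    rw [mem_compression_singleton hij, hswap] at hmem
    rw [mem_compression_singleton hij]
    grind
  rw [h, mem_almostDisjoint, inter_eq_left.2 (by grind), card_pair hai] at hai'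
  omega

lemma card_inter_erase_le_of_compression_eq (hij : i ≠ j) (hi : i ∉ A)
    (h : UV.compression {i} {j} F = almostDisjoint X A) (hE : E ∈ F) :
    #(E ∩ A.erase j) ≤ 1 := by
  have hE' := mem_or_swapAt_mem_compression hij hE
  rw [h, mem_almostDisjoint, mem_almostDisjoint] at hE'
  obtain hE' | hE' := hE'
  · exact (card_le_card (inter_subset_inter_left (erase_subset _ _))).trans hE'.2
  · refine (card_le_card fun z ↦ ?_).trans hE'.2
    grind [mem_swapAt]

lemma subset_almostDisjoint_insert (hF : ∀ E ∈ F, E ⊆ X) (hF' : IsLowerSet (F : Set (Finset α)))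
    (hB : ∀ E ∈ F, #(E ∩ B) ≤ 1) (hp : ∀ b ∈ B, {b, p} ∉ F) :
    F ⊆ almostDisjoint X (insert p B) := by
  intro E hE
  refine mem_almostDisjoint.2 ⟨hF E hE, ?_⟩
  by_cases hpE : p ∈ E
  · have hsub : E ∩ insert p B ⊆ {p} := by
      intro z hz
      by_contra hzp
      exact hp z (by grind) (hF' (show {z, p} ⊆ E by grind) hE)
    exact (card_le_card hsub).trans_eq (card_singleton p)
  · rw [inter_insert_of_notMem hpE]
    exact hB E hE

lemma WiseUnion.pair_notMem_of_compression_eq (hU : WiseUnion r t X F) (hr : 3 ≤ r) (ht₁ : 1 ≤ t)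
    (hij : i ≠ j) (hAX : A ⊆ X) (hA : #A = r + t) (h₁ : ∀ y ∈ X, {y} ∈ F) (hi : i ∉ A)
    (hj : j ∈ A) (h : UV.compression {i} {j} F = almostDisjoint X A) (ha : a ∈ A.erase j)
    (hb : b ∈ A.erase j) (haj : {a, j} ∈ F) : {b, i} ∉ F := by
  intro hbi
  obtain ⟨haj', haA⟩ := mem_erase.1 ha
  have hai : a ≠ i := ne_of_mem_of_not_mem haA hi
  obtain rfl | hab := eq_or_ne a b
  · have hmem : {a, j} ∈ UV.compression {i} {j} F := by
      rw [mem_compression_singleton hij, swapAt_eq_insert_erase (by simp) (by grind),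
        show insert i (({a, j} : Finset α).erase j) = {a, i} by grind]
      exact .inl ⟨haj, hbi⟩
    rw [h, mem_almostDisjoint, inter_eq_left.2 (by grind), card_pair haj'] at hmem
    omega
  have hcard : #(((A.erase j).erase a).erase b) = r + t - 3 := by
    rw [card_erase_of_mem (mem_erase.2 ⟨hab.symm, hb⟩), card_erase_of_mem ha, card_erase_of_mem hj]
    omega
  obtain ⟨S, hSA, hS⟩ := exists_subset_card_eq
    (s := ((A.erase j).erase a).erase b) (n := r - 2) (by omega)
  obtain ⟨c, hc⟩ := card_pos.1 (show 0 < #S by omega)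
  have hcA : c ∈ A ∧ c ≠ j := by grind
  have hcF : insert c (X \ insert i A) ∈ F := by
    have hmem : insert c (X \ insert i A) ∈ UV.compression {i} {j} F := by
      rw [h, mem_almostDisjoint]
      have hsub : insert c (X \ insert i A) ∩ A ⊆ {c} := by grind
      exact ⟨by grind, (card_le_card hsub).trans_eq (card_singleton c)⟩
    rw [mem_compression_singleton hij] at hmem
    grind
  have hunion := IsUnionOf.succ haj (.succ hbi (.succ hcF
    (isUnionOf_card_of_singleton_mem (U := S.erase c) fun y hy ↦ h₁ y (by grind))))
  rw [card_erase_of_mem hc, show #S - 1 + 1 + 1 + 1 = r by omega] at hunion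
  have hle := (hU _ hunion).trans (card_le_card
    (show X \ ({a, j} ∪ ({b, i} ∪ (insert c (X \ insert i A) ∪ S.erase c))) ⊆
      ((A.erase j).erase a).erase b \ S by grind))
  rw [card_sdiff_of_subset hSA] at hle
  omega

lemma WiseUnion.exists_subset_almostDisjoint_of_compression_eq (hU : WiseUnion r t X F)
    (hr : 3 ≤ r) (ht₁ : 1 ≤ t) (hij : i ≠ j) (hi : i ∈ X) (hj : j ∈ X) (hAX : A ⊆ X)
    (hA : #A = r + t) (hF : ∀ E ∈ F, E ⊆ X) (hF' : IsLowerSet (F : Set (Finset α)))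
    (h₁ : ∀ y ∈ X, {y} ∈ F) (h : UV.compression {i} {j} F = almostDisjoint X A) :
    ∃ A' ⊆ X, #A' = r + t ∧ F ⊆ almostDisjoint X A' := by
  by_cases hijA : i ∈ A ↔ j ∈ A
  · exact ⟨A, hAX, hA, subset_almostDisjoint_of_compression_eq hij hF hijA h⟩
  obtain ⟨hiA, hjA⟩ : i ∉ A ∧ j ∈ A := by
    have := right_mem_of_compression_eq hij hj hAX (by omega) (h := h)
    tauto
  have hB : ∀ E ∈ F, #(E ∩ A.erase j) ≤ 1 := fun E ↦
    card_inter_erase_le_of_compression_eq hij hiA h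
  have hcard := card_erase_add_one hjA
  by_cases hpair : ∃ a ∈ A.erase j, {a, j} ∈ F
  · obtain ⟨a, ha, haj⟩ := hpair
    refine ⟨insert i (A.erase j), insert_subset hi ((erase_subset _ _).trans hAX), ?_,
      subset_almostDisjoint_insert hF hF' hB fun b hb ↦
        hU.pair_notMem_of_compression_eq hr ht₁ hij hAX hA h₁ hiA hjA h ha hb haj⟩
    rw [card_insert_of_notMem fun hi ↦ hiA (mem_of_mem_erase hi), hcard, hA]
  · push Not at hpair
    refine ⟨A, hAX, hA, ?_⟩
    have := subset_almostDisjoint_insert hF hF' hB hpair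
    rwa [insert_erase hjA] at this

end Unshift

lemma sum_lt_sum_of_injOn_sdiff {ι : Type*} [DecidableEq ι] {s s' : Finset ι} {f : ι → ι}
    {w : ι → ℕ} (hf : ∀ a ∈ s' \ s, f a ∈ s \ s') (hinj : Set.InjOn f (s' \ s : Finset ι))
    (hw : ∀ a ∈ s' \ s, w a < w (f a)) (hne : (s' \ s).Nonempty) :
    ∑ a ∈ s', w a < ∑ a ∈ s, w a := by
  rw [← sum_sdiff_lt_sum_sdiff]
  calc ∑ a ∈ s' \ s, w a
    _ < ∑ a ∈ s' \ s, w (f a) := sum_lt_sum_of_nonempty hne hw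
    _ = ∑ b ∈ (s' \ s).image f, w b := (sum_image hinj).symm
    _ ≤ ∑ b ∈ s \ s', w b := sum_le_sum_of_subset (image_subset_iff.2 hf)

section LowerSet

variable {α : Type*} [LinearOrder α] {i j : α} {X : Finset α} {F : Finset (Finset α)} {r t : ℕ}

lemma sum_compression_singleton_lt (hi : i ∈ X) (hij : i < j)
    (hne : UV.compression {i} {j} F ≠ F) :
    ∑ E ∈ UV.compression {i} {j} F, ∑ x ∈ E, #{y ∈ X | y < x} <
      ∑ E ∈ F, ∑ x ∈ E, #{y ∈ X | y < x} := by
  have hmem {E : Finset α} (hE : E ∈ UV.compression {i} {j} F \ F) :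
      i ∈ E ∧ j ∉ E ∧ swapAt i j E ∈ F := by
    rw [mem_sdiff, mem_compression_singleton hij.ne] at hE
    tauto
  refine sum_lt_sum_of_injOn_sdiff (f := swapAt i j) (fun E hE ↦ ?_)
    ((image_injective (Equiv.injective _)).injOn) (fun E hE ↦ ?_) ?_
  · obtain ⟨_, hjE, hE'⟩ := hmem hE
    refine mem_sdiff.2 ⟨hE', fun h ↦ ?_⟩
    rw [mem_compression_singleton hij.ne, swapAt_swapAt] at h
    grind [mem_swapAt]
  · obtain ⟨hiE, hjE, -⟩ := hmem hE
    have hlt : #{y ∈ X | y < i} < #{y ∈ X | y < j} := by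
      refine card_lt_card ⟨monotone_filter_right _ fun y _ hy ↦ hy.trans hij, fun h ↦ ?_⟩
      exact (mem_filter.1 (h (mem_filter.2 ⟨hi, hij⟩))).2.false
    rw [swapAt, sum_image (Equiv.injective _).injOn]
    refine sum_lt_sum (fun x hx ↦ ?_) ⟨i, hiE, by rwa [Equiv.swap_apply_left]⟩
    obtain rfl | hxi := eq_or_ne x i
    · rw [Equiv.swap_apply_left]
      exact hlt.le
    · rw [Equiv.swap_apply_of_ne_of_ne hxi (ne_of_mem_of_not_mem hx hjE)]
  · exact sdiff_nonempty.2 fun h ↦ hne (eq_of_subset_of_card_le h (UV.card_compression ..).ge)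

lemma isShiftedComplex_of_compression_eq (hF : ∀ E ∈ F, E ⊆ X)
    (hF' : IsLowerSet (F : Set (Finset α)))
    (h : ∀ i ∈ X, ∀ j ∈ X, i < j → UV.compression {i} {j} F = F) : IsShiftedComplex X F where
  subset := hF
  isLowerSet := hF'
  shift E hE j hj i hi hiE hij := by
    rw [← h i hi j (hF E hE hj) hij, mem_compression_singleton hij.ne,
      ← swapAt_eq_insert_erase hj hiE, swapAt_swapAt]
    grind [mem_swapAt]

theorem density_le_and_eq_almostDisjoint_of_isLowerSet (hr : 3 ≤ r) (ht₁ : 1 ≤ t)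
    (ht : r + t + 2 ≤ 2 ^ r) (hF : ∀ E ∈ F, E ⊆ X) (hF' : IsLowerSet (F : Set (Finset α)))
    (h₁ : ∀ y ∈ X, {y} ∈ F) (hU : WiseUnion r t X F) :
    density X F ≤ (r + t + 1 : ℚ) / 2 ^ (r + t) ∧
      (density X F = (r + t + 1 : ℚ) / 2 ^ (r + t) →
        ∃ A ⊆ X, #A = r + t ∧ F = almostDisjoint X A) := by
  induction hN : ∑ E ∈ F, ∑ x ∈ E, #{y ∈ X | y < x} using Nat.strong_induction_on
    generalizing F with
  | _ N ih =>
  subst hN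
  by_cases hfix : ∀ i ∈ X, ∀ j ∈ X, i < j → UV.compression {i} {j} F = F
  · exact (isShiftedComplex_of_compression_eq hF hF' hfix).density_le_and_eq_almostDisjoint
      hr ht₁ ht h₁ hU
  push Not at hfix
  obtain ⟨i, hi, j, hj, hij, hne⟩ := hfix
  have hdensity : density X (UV.compression {i} {j} F) = density X F := by
    rw [density, UV.card_compression, density]
  obtain ⟨hle, heq⟩ := ih _ (sum_compression_singleton_lt hi hij hne)
    (subset_of_mem_compression_singleton hij.ne hi hj hF)
    (isLowerSet_compression_singleton hij.ne hF')
    (singleton_mem_compression_singleton hij.ne hi h₁)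
    (hU.compression_singleton hij.ne hi hj hF') rfl
  rw [hdensity] at hle heq
  refine ⟨hle, fun h ↦ ?_⟩
  obtain ⟨A, hAX, hA, hcomp⟩ := heq h
  obtain ⟨A', hAX', hA', hsub⟩ := hU.exists_subset_almostDisjoint_of_compression_eq hr ht₁ hij.ne
    hi hj hAX hA hF hF' h₁ hcomp
  refine ⟨A', hAX', hA', eq_of_subset_of_density_le (X := X) hsub ?_⟩
  rw [← hdensity, hcomp, density_almostDisjoint hAX', density_almostDisjoint hAX, hA, hA']

end LowerSet

section Agreement

variable {α : Type*} [DecidableEq α] {X E : Finset α} {F G : Finset (Finset α)} {r t : ℕ} {x : α}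

/-- The points of `X` on which all members of `G` agree. -/
def agreement (X : Finset α) (G : Finset (Finset α)) : Finset α :=
  {x ∈ X | (∀ E ∈ G, x ∈ E) ∨ ∀ E ∈ G, x ∉ E}

/-- The `r`-wise `t`-agreeing property on the ground set `X`. Instead of `r` members with
repetitions, it quantifies over nonempty subfamilies with at most `r` members. -/
def WiseAgreeing (r t : ℕ) (X : Finset α) (F : Finset (Finset α)) : Prop :=
  ∀ G ⊆ F, G.Nonempty → #G ≤ r → t ≤ #(agreement X G)

/-- The non-triviality of a family on the ground set `X`: no point of `X` lies in all members of `F`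
or in none. -/
def NonTrivialOn (X : Finset α) (F : Finset (Finset α)) : Prop :=
  ∀ x ∈ X, (∃ E ∈ F, x ∉ E) ∧ ∃ E ∈ F, x ∈ E

lemma mem_agreement :
    x ∈ agreement X G ↔ x ∈ X ∧ ((∀ E ∈ G, x ∈ E) ∨ ∀ E ∈ G, x ∉ E) := mem_filter

lemma agreement_insert_subset : agreement X (insert E G) ⊆ agreement X G := fun x hx ↦ by
  rw [mem_agreement] at hx ⊢
  grind

lemma NonTrivialOn.exists_notMem_agreement (h : NonTrivialOn X F) (hx : x ∈ agreement X G)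
    (hG : G.Nonempty) : ∃ E ∈ F, x ∉ agreement X (insert E G) := by
  obtain ⟨⟨E, hE, hxE⟩, E', hE', hxE'⟩ := h x (mem_agreement.1 hx).1
  obtain ⟨B, hB⟩ := hG
  by_cases hxB : x ∈ B
  · exact ⟨E, hE, fun hx' ↦ by grind [mem_agreement]⟩
  · exact ⟨E', hE', fun hx' ↦ by grind [mem_agreement]⟩

/- If `x` lies in some but not in all members of `G`, a preimage of `G` under the compression might
still agree at `x`; since a member containing `x` is there with and without `x`, this is repaired
by toggling `x` in that one. -/
lemma exists_preimage_downCompression (hG : G ⊆ Down.compression x F) :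
    ∃ f : Finset α → Finset α, (∀ E ∈ G, f E ∈ F ∧ (f E).erase x = E.erase x) ∧
      (x ∈ agreement X (G.image f) → x ∈ agreement X G) := by
  have hpre : ∀ E ∈ G, ∃ B ∈ F, B.erase x = E.erase x := fun E hE ↦ by
    obtain h | h := Down.mem_compression.1 (hG hE)
    · exact ⟨E, h.1, rfl⟩
    · exact ⟨_, h.2, by grind⟩
  choose! f hfF hf using hpre
  by_cases hx : (∀ E ∈ G, x ∈ E) ∨ ∀ E ∈ G, x ∉ E
  · exact ⟨f, fun E hE ↦ ⟨hfF E hE, hf E hE⟩, fun hx' ↦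
      mem_agreement.2 ⟨(mem_agreement.1 hx').1, hx⟩⟩
  push Not at hx
  obtain ⟨⟨E, hE, hxE⟩, E', hE', hxE'⟩ := hx
  have hEF : E' ∈ F ∧ E'.erase x ∈ F := by
    obtain h | h := Down.mem_compression.1 (hG hE')
    · exact h
    · exact absurd (insert_eq_self.2 hxE' ▸ h.2) h.1
  refine ⟨Function.update f E' (if x ∈ f E then E'.erase x else E'), fun B hB ↦ ?_, fun hx' ↦ ?_⟩
  · obtain rfl | hBE := eq_or_ne B E'
    · rw [Function.update_self]
      split_ifs
      exacts [⟨hEF.2, erase_idem⟩, ⟨hEF.1, rfl⟩]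
    · rw [Function.update_of_ne hBE]
      exact ⟨hfF B hB, hf B hB⟩
  · have hne : E ≠ E' := by grind
    have hmem := (mem_agreement.1 hx').2
    simp only [forall_mem_image] at hmem
    have h₁ := hmem.imp (· hE) (· hE)
    have h₂ := hmem.imp (· hE') (· hE')
    grind

namespace WiseAgreeing

lemma of_succ (h : WiseAgreeing (r + 1) t X F) : WiseAgreeing r t X F :=
  fun G hG hne hr ↦ h G hG hne (hr.trans r.le_succ)

lemma succ_of_nonTrivialOn (h : WiseAgreeing (r + 1) t X F) (ht : 1 ≤ t)
    (hnt : NonTrivialOn X F) : WiseAgreeing r (t + 1) X F := fun G hG hne hr ↦ by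
  obtain ⟨x, hx⟩ := card_pos.1 (ht.trans (h.of_succ G hG hne hr))
  obtain ⟨E, hE, hxE⟩ := hnt.exists_notMem_agreement hx hne
  have hlt := card_lt_card
    ((ssubset_iff_of_subset agreement_insert_subset).2 ⟨x, hx, hxE⟩)
  have := h (insert E G) (insert_subset hE hG) (insert_nonempty _ _)
    ((card_insert_le _ _).trans (Nat.succ_le_succ hr))
  omega

lemma erase (h : WiseAgreeing r t X F) (x : α) : WiseAgreeing r (t - 1) (X.erase x) F := by
  intro G hG hne hr
  have hle := pred_card_le_card_erase (s := agreement X G) (a := x)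
  have hsub : (agreement X G).erase x ⊆ agreement (X.erase x) G := by grind [mem_agreement]
  have := h G hG hne hr
  have := card_le_card hsub
  omega

lemma of_image {f : Finset α → Finset α} (h : WiseAgreeing r t X F) (hf : ∀ E ∈ G, f E ∈ F)
    (hG : G.Nonempty) (hr : #G ≤ r) : t ≤ #(agreement X (G.image f)) :=
  h _ (image_subset_iff.2 hf) (hG.image f) (card_image_le.trans hr)

lemma image_symmDiff (h : WiseAgreeing r t X F) (R : Finset α) :
    WiseAgreeing r t X (F.image (· ∆ R)) := fun G hG hne hr ↦ by
  refine (h.of_image (f := (· ∆ R)) (fun E hE ↦ ?_) hne hr).trans (card_le_card fun x hx ↦ ?_)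
  · obtain ⟨B, hB, rfl⟩ := mem_image.1 (hG hE)
    rwa [symmDiff_symmDiff_cancel_right]
  · rw [mem_agreement] at hx ⊢
    simp only [forall_mem_image, mem_symmDiff] at hx
    grind

lemma downCompression (h : WiseAgreeing r t X F) (x : α) :
    WiseAgreeing r t X (Down.compression x F) := fun G hG hne hr ↦ by
  obtain ⟨f, hf, hx⟩ := exists_preimage_downCompression (X := X) hG
  refine (h.of_image (fun E hE ↦ (hf E hE).1) hne hr).trans (card_le_card fun y hy ↦ ?_)
  obtain rfl | hyx := eq_or_ne y x
  · exact hx hy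
  have hmem : ∀ E ∈ G, y ∈ f E ↔ y ∈ E := fun E hE ↦ by
    simpa [hyx] using Finset.ext_iff.1 (hf E hE).2 y
  rw [mem_agreement] at hy ⊢
  simp only [forall_mem_image] at hy
  grind

end WiseAgreeing

end Agreement

section UndoDown

variable {α : Type*} [DecidableEq α] {X A R E : Finset α} {F : Finset (Finset α)} {r t : ℕ}
  {x a b : α}

lemma WiseAgreeing.eq_of_mem_inter_erase (h : WiseAgreeing r t X F) (hr : 3 ≤ r) (ht₁ : 1 ≤ t)
    (hA : #A = r + t) (hx : x ∈ A) (hF : ∀ E ∈ F, #(E ∩ A.erase x) ≤ 1)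
    (hex : ∀ c ∈ A.erase x, ∀ W, ∃ E ∈ F, E ∩ A.erase x = {c} ∧ E \ A = (X \ A) \ W)
    {E₁ E₂ : Finset α} (h₁ : E₁ ∈ F) (h₂ : E₂ ∈ F) (hx₁ : x ∈ E₁) (hx₂ : x ∉ E₂)
    (ha : a ∈ E₁ ∩ A.erase x) (hb : b ∈ E₂ ∩ A.erase x) : a = b := by
  by_contra hab
  have hE₁ : ∀ y ∈ E₁, y ∈ A.erase x → y = a := fun y hy hyA ↦
    card_le_one.1 (hF E₁ h₁) y (mem_inter.2 ⟨hy, hyA⟩) a ha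
  have hE₂ : ∀ y ∈ E₂, y ∈ A.erase x → y = b := fun y hy hyA ↦
    card_le_one.1 (hF E₂ h₂) y (mem_inter.2 ⟨hy, hyA⟩) b hb
  have hcard : #(((A.erase x).erase a).erase b) = r + t - 3 := by
    rw [card_erase_of_mem (by grind), card_erase_of_mem (by grind), card_erase_of_mem hx]
    omega
  obtain ⟨S, hSA, hS⟩ := exists_subset_card_eq
    (s := ((A.erase x).erase a).erase b) (n := r - 2) (by omega)
  obtain ⟨c, hc⟩ := card_pos.1 (show 0 < #S by omega)
  have hSx : ∀ y ∈ S, y ∈ A.erase x := fun y hy ↦ by grind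
  choose! H hHF hH using fun y hy ↦ hex y hy E₁
  have hG := h (insert E₁ (insert E₂ (S.image H))) (by grind) (insert_nonempty _ _) (by
    have := card_insert_le E₁ (insert E₂ (S.image H))
    have := card_insert_le E₂ (S.image H)
    have := card_image_le (s := S) (f := H)
    omega)
  have hsub : agreement X (insert E₁ (insert E₂ (S.image H))) ⊆
      ((A.erase x).erase a).erase b \ S := fun y hy ↦ by
    rw [mem_agreement] at hy
    simp only [forall_mem_insert, forall_mem_image] at hy
    have hHc := hH c (hSx c hc)
    have hyA : y ∈ A := by
      by_contra hyA
      have := Finset.ext_iff.1 hHc.2 y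
      grind
    have hyx : y ≠ x := by grind
    have hyS : y ∉ S := fun hyS ↦ by
      have := Finset.ext_iff.1 (hH y (hSx y hyS)).1 y
      grind
    grind
  have hle := card_le_card hsub
  rw [card_sdiff_of_subset hSA] at hle
  omega

lemma WiseAgreeing.disjoint_erase (h : WiseAgreeing r t X F) (hr : 3 ≤ r) (ht₁ : 1 ≤ t)
    (hA : #A = r + t) (hx : x ∈ A) (hF : ∀ E ∈ F, #(E ∩ A.erase x) ≤ 1)
    (hex : ∀ c ∈ A.erase x, ∀ W, ∃ E ∈ F, E ∩ A.erase x = {c} ∧ E \ A = (X \ A) \ W)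
    {E₁ E₂ : Finset α} (h₁ : E₁ ∈ F) (h₂ : E₂ ∈ F) (hx₁ : x ∈ E₁) (hx₂ : x ∉ E₂)
    (ha : a ∈ E₁ ∩ A.erase x) : Disjoint E₂ (A.erase x) := by
  refine disjoint_left.2 fun b hb hbA ↦ ?_
  have heq {E₁ E₂ : Finset α} {a b : α} := h.eq_of_mem_inter_erase hr ht₁ hA hx hF hex
    (E₁ := E₁) (E₂ := E₂) (a := a) (b := b)
  obtain rfl := heq h₁ h₂ hx₁ hx₂ ha (mem_inter.2 ⟨hb, hbA⟩)
  obtain ⟨c, hc⟩ := card_pos.1 (show 0 < #((A.erase x).erase a) by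
    rw [card_erase_of_mem hbA, card_erase_of_mem hx]
    omega)
  obtain ⟨hca, hcA⟩ := mem_erase.1 hc
  obtain ⟨E, hE, hEc, -⟩ := hex c hcA ∅
  have hcE : c ∈ E ∩ A.erase x := hEc ▸ mem_singleton_self c
  by_cases hxE : x ∈ E
  · exact hca (heq hE h₂ hxE hx₂ hcE (mem_inter.2 ⟨hb, hbA⟩))
  · exact hca (heq h₁ hE hx₁ hxE ha hcE).symm

lemma WiseAgreeing.exists_subset_singleton_card_symmDiff_inter_le (h : WiseAgreeing r t X F)
    (hr : 3 ≤ r) (ht₁ : 1 ≤ t) (hA : #A = r + t) (hx : x ∈ A)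
    (hF : ∀ E ∈ F, #(E ∩ A.erase x) ≤ 1)
    (hex : ∀ c ∈ A.erase x, ∀ W, ∃ E ∈ F, E ∩ A.erase x = {c} ∧ E \ A = (X \ A) \ W) :
    ∃ R ⊆ {x}, ∀ E ∈ F, #((E ∆ R) ∩ A) ≤ 1 := by
  by_cases hmem : ∃ E₁ ∈ F, x ∈ E₁ ∧ (E₁ ∩ A.erase x).Nonempty
  · obtain ⟨E₁, h₁, hx₁, a, ha⟩ := hmem
    refine ⟨{x}, subset_rfl, fun E hE ↦ ?_⟩
    by_cases hxE : x ∈ E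
    · exact (card_le_card (by grind [mem_symmDiff])).trans (hF E hE)
    · have hdisj := disjoint_left.1
        (h.disjoint_erase hr ht₁ hA hx hF hex h₁ hE hx₁ hxE ha)
      have hsub : (E ∆ {x}) ∩ A ⊆ {x} := by grind [mem_symmDiff]
      exact (card_le_card hsub).trans_eq (card_singleton x)
  · refine ⟨∅, empty_subset _, fun E hE ↦ ?_⟩
    by_cases hxE : x ∈ E
    · have hempty : ¬(E ∩ A.erase x).Nonempty := fun hne ↦ hmem ⟨E, hE, hxE, hne⟩
      rw [not_nonempty_iff_eq_empty, inter_erase, erase_eq_empty_iff] at hempty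
      have hsub : (E ∆ ∅) ∩ A ⊆ {x} := by grind [mem_symmDiff]
      exact (card_le_card hsub).trans_eq (card_singleton x)
    · exact (card_le_card (by grind [mem_symmDiff])).trans (hF E hE)

lemma mem_image_symmDiff : E ∈ F.image (· ∆ R) ↔ E ∆ R ∈ F := by
  rw [mem_image]
  refine ⟨?_, fun h ↦ ⟨_, h, symmDiff_symmDiff_cancel_right _ _⟩⟩
  rintro ⟨B, hB, rfl⟩
  rwa [symmDiff_symmDiff_cancel_right]

lemma mem_image_almostDisjoint (hR : R ⊆ X) :
    E ∈ (almostDisjoint X A).image (· ∆ R) ↔ E ⊆ X ∧ #((E ∆ R) ∩ A) ≤ 1 := by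
  rw [mem_image_symmDiff, mem_almostDisjoint]
  have : E ∆ R ⊆ X ↔ E ⊆ X := by grind [mem_symmDiff]
  rw [this]

lemma exists_mem_inter_erase_eq_singleton_of_downCompression_eq (hRA : R ⊆ A) (hAX : A ⊆ X)
    (hx : x ∈ A) (h : Down.compression x F = (almostDisjoint X A).image (· ∆ R))
    (ha : a ∈ A.erase x) (W : Finset α) :
    ∃ E ∈ F.image (· ∆ R), E ∩ A.erase x = {a} ∧ E \ A = (X \ A) \ W := by
  have hmem : R ∆ {a} ∪ (X \ A) \ W ∈ Down.compression x F := by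
    rw [h, mem_image_almostDisjoint (hRA.trans hAX)]
    have hsub : ((R ∆ {a} ∪ (X \ A) \ W) ∆ R) ∩ A ⊆ {a} := by grind [mem_symmDiff]
    exact ⟨by grind [mem_symmDiff], (card_le_card hsub).trans_eq (card_singleton a)⟩
  obtain ⟨hmem, -⟩ | ⟨-, hmem⟩ := Down.mem_compression.1 hmem
  all_goals exact ⟨_, mem_image_of_mem _ hmem, by grind [mem_symmDiff], by grind [mem_symmDiff]⟩

lemma WiseAgreeing.exists_eq_image_almostDisjoint_of_downCompression_eq (h : WiseAgreeing r t X F)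
    (hr : 3 ≤ r) (ht₁ : 1 ≤ t) (hF : ∀ E ∈ F, E ⊆ X) (hRA : R ⊆ A) (hAX : A ⊆ X)
    (hA : #A = r + t) (hcomp : Down.compression x F = (almostDisjoint X A).image (· ∆ R)) :
    ∃ R' ⊆ A, F = (almostDisjoint X A).image (· ∆ R') := by
  have herase : ∀ E ∈ F, #((E.erase x ∆ R) ∩ A) ≤ 1 := fun E hE ↦ by
    have hmem := Down.erase_mem_compression (a := x) hE
    rw [hcomp, mem_image_almostDisjoint (hRA.trans hAX)] at hmem
    exact hmem.2
  suffices ∃ R' ⊆ A, ∀ E ∈ F, #((E ∆ R') ∩ A) ≤ 1 by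
    obtain ⟨R', hR', hle⟩ := this
    refine ⟨R', hR', eq_of_subset_of_card_le
      (fun E hE ↦ (mem_image_almostDisjoint (hR'.trans hAX)).2 ⟨hF E hE, hle E hE⟩) ?_⟩
    rw [← Down.card_compression x F, hcomp, card_image_of_injective _ (symmDiff_left_injective R),
      card_image_of_injective _ (symmDiff_left_injective R')]
  by_cases hx : x ∈ A
  · obtain ⟨R', hR', hle⟩ := (h.image_symmDiff R).exists_subset_singleton_card_symmDiff_inter_le
      hr ht₁ hA hx
      (forall_mem_image.2 fun E hE ↦ (card_le_card (by grind [mem_symmDiff])).trans (herase E hE))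
      fun a ha ↦ exists_mem_inter_erase_eq_singleton_of_downCompression_eq hRA hAX hx hcomp ha
    refine ⟨R ∆ R', by grind [mem_symmDiff], fun E hE ↦ ?_⟩
    rw [← symmDiff_assoc]
    exact hle _ (mem_image_of_mem _ hE)
  · exact ⟨R, hRA, fun E hE ↦ (card_le_card (by grind [mem_symmDiff])).trans (herase E hE)⟩

end UndoDown

section Main

variable {α : Type*} {X U : Finset α} {F : Finset (Finset α)} {r t : ℕ} {x : α}

section DecidableEq

variable [DecidableEq α]

lemma IsUnionOf.exists_eq_biUnion (hU : IsUnionOf F r U) :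
    ∃ G ⊆ F, #G ≤ r ∧ U = G.biUnion id := by
  induction hU with
  | zero => exact ⟨∅, empty_subset _, by simp, rfl⟩
  | @succ r E V hE _ ih =>
    obtain ⟨G, hG, hr, rfl⟩ := ih
    exact ⟨insert E G, insert_subset hE hG, (card_insert_le _ _).trans (Nat.succ_le_succ hr),
      by rw [biUnion_insert, id]⟩

/- Two members of a lower set may be taken disjoint without changing their union, and then no
point lies in all members. -/
lemma WiseAgreeing.wiseUnion (h : WiseAgreeing r t X F) (hr : 2 ≤ r)
    (hF : IsLowerSet (F : Set (Finset α))) : WiseUnion r t X F := by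
  intro U hU
  obtain ⟨r, rfl⟩ := Nat.exists_eq_add_of_le' hr
  obtain _ | @⟨_, E, _, hE, _ | @⟨_, E', V, hE', hV⟩⟩ := hU
  obtain ⟨G, hG, hGr, rfl⟩ := hV.exists_eq_biUnion
  refine (h (insert (E \ E') (insert E' G))
    (insert_subset (hF sdiff_subset hE) (insert_subset hE' hG)) (insert_nonempty _ _) ?_).trans
    (card_le_card fun y hy ↦ ?_)
  · have := card_insert_le (E \ E') (insert E' G)
    have := card_insert_le E' G
    omega
  · rw [mem_agreement] at hy
    simp only [forall_mem_insert] at hy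
    grind

lemma isLowerSet_of_downCompression_eq (hF : ∀ E ∈ F, E ⊆ X)
    (h : ∀ x ∈ X, Down.compression x F = F) : IsLowerSet (F : Set (Finset α)) := by
  have herase {E : Finset α} {x : α} (hE : E ∈ F) (hx : x ∈ E) : E.erase x ∈ F := by
    rw [← h x (hF E hE hx)]
    exact Down.erase_mem_compression hE
  have hsdiff (E W : Finset α) (hE : E ∈ F) : E \ W ∈ F := by
    induction W using Finset.induction_on with
    | empty => rwa [sdiff_empty]
    | insert x W _ ih =>
      rw [sdiff_insert]
      by_cases hx : x ∈ E \ W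
      · exact herase ih hx
      · rwa [erase_eq_of_notMem hx]
  intro E E' hE'E hE
  rw [← Finset.sdiff_sdiff_eq_self hE'E]
  exact hsdiff E _ hE

lemma sum_card_downCompression_lt (hne : Down.compression x F ≠ F) :
    ∑ E ∈ Down.compression x F, #E < ∑ E ∈ F, #E := by
  have hmem {E : Finset α} (hE : E ∈ Down.compression x F \ F) : insert x E ∈ F ∧ x ∉ E := by
    rw [mem_sdiff, Down.mem_compression] at hE
    grind
  refine sum_lt_sum_of_injOn_sdiff (f := insert x) (fun E hE ↦ ?_) (fun E hE E' hE' h ↦ ?_)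
    (fun E hE ↦ ?_) ?_
  · obtain ⟨hE', hxE⟩ := hmem hE
    refine mem_sdiff.2 ⟨hE', fun h ↦ (mem_sdiff.1 hE).2 ?_⟩
    rw [Down.mem_compression, erase_insert hxE] at h
    grind
  · rw [← erase_insert (hmem hE).2, h, erase_insert (hmem hE').2]
  · rw [card_insert_of_notMem (hmem hE).2]
    exact Nat.lt_succ_self _
  · exact sdiff_nonempty.2 fun h ↦ hne (eq_of_subset_of_card_le h (Down.card_compression ..).ge)

lemma density_downCompression (X : Finset α) (x : α) (F : Finset (Finset α)) :
    density X (Down.compression x F) = density X F := by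
  rw [density, Down.card_compression, density]

lemma subset_of_mem_downCompression (hF : ∀ E ∈ F, E ⊆ X) :
    ∀ E ∈ Down.compression x F, E ⊆ X := fun E hE ↦ by
  obtain h | h := Down.mem_compression.1 hE
  · exact hF E h.1
  · exact (subset_insert x E).trans (hF _ h.2)

lemma NonTrivialOn.downCompression_erase (h : NonTrivialOn X F) :
    NonTrivialOn (X.erase x) (Down.compression x F) := fun y hy ↦ by
  obtain ⟨hyx, hyX⟩ := mem_erase.1 hy
  obtain ⟨⟨E, hE, hyE⟩, E', hE', hyE'⟩ := h y hyX
  exact ⟨⟨_, Down.erase_mem_compression hE, fun hy ↦ hyE (mem_of_mem_erase hy)⟩,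
    _, Down.erase_mem_compression hE', mem_erase.2 ⟨hyx, hyE'⟩⟩

lemma NonTrivialOn.downCompression (h : NonTrivialOn X F)
    (hx : ∃ E ∈ Down.compression x F, x ∈ E) : NonTrivialOn X (Down.compression x F) := by
  intro y hy
  obtain rfl | hyx := eq_or_ne y x
  · obtain ⟨E, hE, hyE⟩ := hx
    exact ⟨⟨_, Down.erase_mem_compression_of_mem_compression hE, notMem_erase _ _⟩, E, hE, hyE⟩
  · exact h.downCompression_erase y (mem_erase.2 ⟨hyx, hy⟩)

lemma WiseAgreeing.density_le_half (h : WiseAgreeing 2 1 X F) (hF : ∀ E ∈ F, E ⊆ X) :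
    density X F ≤ 1 / 2 := by
  have hinj : Set.InjOn (X \ ·) (F : Set (Finset α)) := fun E hE E' hE' hEE' ↦ by
    rw [← Finset.sdiff_sdiff_eq_self (hF E hE), ← Finset.sdiff_sdiff_eq_self (hF E' hE')]
    exact congrArg (X \ ·) hEE'
  have hdisj : Disjoint F (F.image (X \ ·)) := by
    refine disjoint_right.2 (forall_mem_image.2 fun E hE hE' ↦ ?_)
    obtain ⟨x, hx⟩ := card_pos.1 (h {E, X \ E} (by grind) (insert_nonempty _ _) card_le_two)
    grind [mem_agreement]
  have hsub : F ∪ F.image (X \ ·) ⊆ X.powerset := by grind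
  have hle := card_le_card hsub
  rw [card_union_of_disjoint hdisj, card_image_of_injOn hinj, card_powerset, ← two_mul] at hle
  rw [density, div_le_div_iff₀ (by positivity) (by positivity), mul_comm, one_mul]
  exact_mod_cast hle

/- Deleting `x` halves the density, while `t` drops by one if `2 ≤ t`. If `t = 1`, then one member
is given up first to gain an agreement. -/
lemma WiseAgreeing.density_lt_of_notMem_downCompression (h : WiseAgreeing r t X F) (hr : 3 ≤ r)
    (ht₁ : 1 ≤ t) (ht : r + t + 2 ≤ 2 ^ r) (hnt : NonTrivialOn X F) (hF : ∀ E ∈ F, E ⊆ X)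
    (hx : x ∈ X) (hxF : ∀ E ∈ Down.compression x F, x ∉ E)
    (ih : ∀ {r t : ℕ}, 3 ≤ r → 1 ≤ t → r + t + 2 ≤ 2 ^ r →
      WiseAgreeing r t (X.erase x) (Down.compression x F) →
      density (X.erase x) (Down.compression x F) ≤ (r + t + 1 : ℚ) / 2 ^ (r + t)) :
    density X F < (r + t + 1 : ℚ) / 2 ^ (r + t) := by
  rw [← density_downCompression X x, density_eq_density_erase_div_two hx,
    div_lt_iff₀ two_pos]
  obtain rfl | ht₂ := ht₁.eq_or_lt'
  · obtain ⟨r, rfl⟩ := Nat.exists_eq_add_of_le' (show 1 ≤ r by omega)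
    have h' := ((h.succ_of_nonTrivialOn le_rfl hnt).downCompression x).erase x
    have hle : density (X.erase x) (Down.compression x F) ≤ (r + 1 + 1 : ℚ) / 2 ^ (r + 1) := by
      obtain rfl | hr₃ := (show 2 ≤ r by omega).eq_or_lt'
      · refine (h'.density_le_half fun E hE ↦ subset_erase.2
          ⟨subset_of_mem_downCompression hF E hE, hxF E hE⟩).trans (by norm_num)
      · exact_mod_cast ih hr₃ le_rfl (by have := two_mul_add_two_le_two_pow hr₃; omega) h'
    refine hle.trans_lt ?_
    rw [pow_succ 2 (r + 1), ← div_div, div_mul_cancel₀ _ two_ne_zero]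
    push_cast
    gcongr
    linarith
  · obtain ⟨t, rfl⟩ := Nat.exists_eq_add_of_le' ht₁
    refine (ih hr (by omega) (by omega) ((h.downCompression x).erase x)).trans_lt ?_
    rw [Nat.add_sub_cancel, ← add_assoc, pow_succ 2, ← div_div, div_mul_cancel₀ _ two_ne_zero]
    push_cast
    gcongr
    linarith

end DecidableEq

theorem WiseAgreeing.density_le_and_eq_image_almostDisjoint [LinearOrder α]
    (h : WiseAgreeing r t X F) (hr : 3 ≤ r) (ht₁ : 1 ≤ t) (ht : r + t + 2 ≤ 2 ^ r)
    (hnt : NonTrivialOn X F) (hF : ∀ E ∈ F, E ⊆ X) :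
    density X F ≤ (r + t + 1 : ℚ) / 2 ^ (r + t) ∧
      (density X F = (r + t + 1 : ℚ) / 2 ^ (r + t) →
        ∃ A ⊆ X, #A = r + t ∧ ∃ R ⊆ A, F = (almostDisjoint X A).image (· ∆ R)) := by
  induction hN : #X + ∑ E ∈ F, #E using Nat.strong_induction_on generalizing X F r t with
  | _ N ih =>
  subst hN
  by_cases hfix : ∀ x ∈ X, Down.compression x F = F
  · have hF' := isLowerSet_of_downCompression_eq hF hfix
    have h₁ : ∀ x ∈ X, {x} ∈ F := fun x hx ↦
      have ⟨_, E, hE, hxE⟩ := hnt x hx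
      hF' (singleton_subset_iff.2 hxE) hE
    obtain ⟨hle, heq⟩ := density_le_and_eq_almostDisjoint_of_isLowerSet hr ht₁ ht hF hF' h₁
      (h.wiseUnion (by omega) hF')
    refine ⟨hle, fun hd ↦ ?_⟩
    obtain ⟨A, hAX, hA, rfl⟩ := heq hd
    exact ⟨A, hAX, hA, ∅, empty_subset A, by simp [← bot_eq_empty]⟩
  push Not at hfix
  obtain ⟨x, hx, hne⟩ := hfix
  have hsum := sum_card_downCompression_lt hne
  by_cases hxF : ∃ E ∈ Down.compression x F, x ∈ E
  · obtain ⟨hle, heq⟩ := ih _ (Nat.add_lt_add_left hsum _) (h.downCompression x) hr ht₁ ht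
      (hnt.downCompression hxF) (subset_of_mem_downCompression hF) rfl
    rw [density_downCompression] at hle heq
    refine ⟨hle, fun hd ↦ ?_⟩
    obtain ⟨A, hAX, hA, R, hRA, hcomp⟩ := heq hd
    exact ⟨A, hAX, hA,
      h.exists_eq_image_almostDisjoint_of_downCompression_eq hr ht₁ hF hRA hAX hA hcomp⟩
  · push Not at hxF
    have hlt := h.density_lt_of_notMem_downCompression hr ht₁ ht hnt hF hx hxF
      fun hr ht₁ ht h' ↦ (ih _ (by have := card_erase_lt_of_mem hx; omega) h' hr ht₁ ht
        hnt.downCompression_erase (fun E hE ↦ subset_erase.2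
          ⟨subset_of_mem_downCompression hF E hE, hxF E hE⟩) rfl).1
    exact ⟨hlt.le, fun hd ↦ absurd hd hlt.ne⟩

end Main

section Fin

variable {n r t : ℕ} {F : Finset (Finset (Fin n))}

lemma AgreeingFamily.wiseAgreeing (h : AgreeingFamily n r t F) : WiseAgreeing r t univ F := by
  intro G hGF hG hGr
  obtain ⟨e⟩ := Function.Embedding.nonempty_of_card_le (α := G) (β := Fin r) (by simpa using hGr)
  have : Nonempty G := hG.to_subtype
  let f (i : Fin r) : Finset (Fin n) := (Function.invFun e i : G)
  have hf : ∀ i, f i ∈ G := fun i ↦ (Function.invFun e i).2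
  have hsurj : ∀ E ∈ G, ∃ i, f i = E := fun E hE ↦
    ⟨e ⟨E, hE⟩, congrArg Subtype.val (Function.leftInverse_invFun e.injective ⟨E, hE⟩)⟩
  refine (h f fun i ↦ hGF (hf i)).trans (card_le_card fun x hx ↦ ?_)
  rw [mem_agreement]
  rw [agreeSet, mem_filter] at hx
  refine ⟨mem_univ x, hx.2.imp (fun hx E hE ↦ ?_) fun hx E hE ↦ ?_⟩
  all_goals
    obtain ⟨i, rfl⟩ := hsurj E hE
    exact hx i

lemma NonTrivialFamily.nonTrivialOn (h : NonTrivialFamily n F) : NonTrivialOn univ F :=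
  fun x _ ↦ ⟨h.1 x, h.2 x⟩

lemma almostDisjoint_univ (A : Finset (Fin n)) :
    almostDisjoint univ A = univ.filter fun B ↦ #(B ∩ A) ≤ 1 := by
  simp [almostDisjoint]

lemma density_univ_eq_div_two_pow {s c : ℕ} (hs : s ≤ n) (hF : #F = c * 2 ^ (n - s)) :
    density univ F = (c : ℚ) / 2 ^ s := by
  rw [density, hF, card_univ, Fintype.card_fin, div_eq_div_iff (by positivity) (by positivity),
    Nat.cast_mul, Nat.cast_pow, Nat.cast_two, mul_assoc, ← pow_add, Nat.sub_add_cancel hs]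

end Fin

theorem stmt16 (n r t : ℕ) (hn : r + t < n) (hr : 3 ≤ r) (ht1 : 1 ≤ t)
    (ht : t < 2 ^ r - r - 1) (F : Finset (Finset (Fin n)))
    (hnt : NonTrivialFamily n F) (hag : AgreeingFamily n r t F)
    (hcard : F.card = (r + t + 1) * 2 ^ (n - r - t)) :
    ∃ A : Finset (Fin n), A.card = r + t ∧ ∃ R ⊆ A,
      F = (Finset.univ.filter (fun B : Finset (Fin n) => (B ∩ A).card ≤ 1)).image
            (fun B => B ∆ R) := by
  rw [Nat.sub_sub] at hcard
  have hdensity := density_univ_eq_div_two_pow hn.le hcard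
  push_cast at hdensity
  obtain ⟨A, -, hA, R, hRA, rfl⟩ := (hag.wiseAgreeing.density_le_and_eq_image_almostDisjoint hr ht1
    (by omega) hnt.nonTrivialOn fun E _ ↦ subset_univ E).2 hdensity
  exact ⟨A, hA, R, hRA, by rw [almostDisjoint_univ]⟩
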